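/- Let k be a positive integer and let G be a (finite simple) graph that is 2-connected but not 3-connected. If the minimum degree of G is at least k + 1, then G contains k cycles satisfying the length condition. -/

import Mathlib

/-!
A graph that is 2-connected but not 3-connected and has at least four vertices has a cut `{x, y}`.
Let `W₁` be a union of components of `G - {x, y}` and `W₂` the remaining vertices. In each `Wᵢ`
there are `k` paths from the neighbourhood of `x` to the neighbourhood of `y` whose lengths form an
arithmetic progression with common difference `1` or `2` (`CycLen.rooted`). A path through `W₁` and
one through `W₂` close up to a cycle, and the lengths of the two paths can be increased so that the
sum grows by two in each step (`CycLen.cycles_of_adm`). With three vertices, `k = 1` and `G` is a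
triangle.

The statement about paths is phrased for a vertex set `W` with two sets of terminals `S` and `T`,
thought of as the neighbourhoods of two additional roots: if all vertices have degree at least `D`,
counting the roots, and the rooted graph has the connectivity `CycLen.RC`, then there are `D - 1`
such paths from `S` to `T` inside `W`. The proof is by induction on the size of `W`. The case
`D = 3` is `CycLen.two_paths`, in a version that exempts one vertex from the degree bound. For
`D ≥ 4`, cut vertices are removed by the induction hypothesis, which leads to the setting
`CycLen.Ctx`.

There one looks at a dense subgraph at the terminals `S`: a largest clique in `S` if `S` spans an
edge (`CycLen.Ctx.clique`), a largest clique in the common neighbourhood of two members of `S` if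
it contains an edge (`CycLen.Ctx.diamond`), and otherwise a largest complete bipartite graph between
`A` and the common neighbours `B ⊆ S` of `A`, where `#B ≥ #A + 1` (`CycLen.Ctx.bip_or`). Such a
subgraph offers `r` paths from `S` to each of its vertices on one side (`CycLen.Exits`), while by
maximality an outside vertex has few neighbours in it. The induction hypothesis for an outside
component therefore loses about as many paths as are regained when its paths are prolonged by those
inside the dense subgraph, since the sums of two admissible progressions with `a` and `b` terms
contain one with `a + b - 1` terms (`CycLen.ap_sum`). If the component fails to be sufficiently
connected, a part of it attached at a single vertex is used instead (`CycLen.Ctx.inst`). All this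
works unless the dense subgraph swallows `T`; doing the same from the side of `T`, only
configurations with `S = T` are left, and these are treated directly (`CycLen.Ctx.same` in the
bipartite case).
-/


open SimpleGraph

/-- A finite simple graph is 2-connected if it is connected, has at least 3 vertices,
and remains connected after deleting any single vertex. -/
def TwoConnected {V : Type*} [Fintype V] (G : SimpleGraph V) : Prop :=
  G.Connected ∧ 3 ≤ Fintype.card V ∧
    ∀ v : V, (G.induce ({v}ᶜ : Set V)).Connected

/-- A finite simple graph is 3-connected if it has at least 4 vertices and remains
connected after deleting any set of at most 2 vertices. -/
def ThreeConnected {V : Type*} [Fintype V] (G : SimpleGraph V) : Prop :=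
  4 ≤ Fintype.card V ∧
    ∀ s : Set V, s.ncard ≤ 2 → (G.induce sᶜ).Connected

/-- The sequence of lengths `f 1, …, f k` satisfies the length condition:
`f 1 ≥ 2` and consecutive lengths differ by exactly `2`. -/
def LengthSeq (k : ℕ) (f : ℕ → ℕ) : Prop :=
  2 ≤ f 1 ∧ ∀ i, 1 ≤ i → i ≤ k - 1 → f (i + 1) = f i + 2

set_option linter.unusedSectionVars false

namespace CycLen

variable {V : Type*} [Fintype V] [DecidableEq V] (G : SimpleGraph V) [DecidableRel G.Adj]

/-! ### Paths inside a vertex set -/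

/-- There is a path with `n` edges from `u` to `v` all of whose vertices lie in `W`. -/
def PathIn (W : Finset V) (u v : V) (n : ℕ) : Prop :=
  ∃ p : G.Walk u v, p.IsPath ∧ (∀ z ∈ p.support, z ∈ W) ∧ p.length = n

/-- The set of vertices adjacent to some member of `E`. -/
def nb (E : Finset V) : Finset V := Finset.univ.filter fun v => ∃ e ∈ E, G.Adj e v

/-- `Adm G W S T k`: there are `k` paths inside `W` from `S` to `T` whose lengths form an
arithmetic progression with common difference `1` or `2`. -/
def Adm (W S T : Finset V) (k : ℕ) : Prop :=
  ∃ a d, (d = 1 ∨ d = 2) ∧ ∀ i < k, ∃ s ∈ S, ∃ t ∈ T, PathIn G W s t (a + i * d)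

/-- `Exits G H S E r`: every `e ∈ E` is the end of `r` paths inside `H` that start in `S`, and
the lengths of these paths form one and the same arithmetic progression, with common difference
`1` or `2`, for all `e`. -/
def Exits (H S E : Finset V) (r : ℕ) : Prop :=
  ∃ a d, (d = 1 ∨ d = 2) ∧ ∀ e ∈ E, ∀ i < r, ∃ s ∈ S, PathIn G H s e (a + i * d)

variable {G}

lemma mem_nb {E : Finset V} {v : V} : v ∈ nb G E ↔ ∃ e ∈ E, G.Adj e v := by simp [nb]

lemma mem_nb_single {u v : V} : v ∈ nb G {u} ↔ G.Adj u v := by simp [nb]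

lemma PathIn.single {W : Finset V} {v : V} (h : v ∈ W) : PathIn G W v v 0 :=
  ⟨.nil, by simp, by simpa using h, rfl⟩

lemma PathIn.mono {W W' : Finset V} {u v : V} {n : ℕ} (h : PathIn G W u v n) (hW : W ⊆ W') :
    PathIn G W' u v n := by
  obtain ⟨p, h1, h2, h3⟩ := h
  exact ⟨p, h1, fun z hz => hW (h2 z hz), h3⟩

lemma PathIn.symm {W : Finset V} {u v : V} {n : ℕ} (h : PathIn G W u v n) :
    PathIn G W v u n := by
  obtain ⟨p, h1, h2, h3⟩ := h
  exact ⟨p.reverse, h1.reverse, fun z hz => h2 z (by simpa using hz), by simpa using h3⟩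

lemma PathIn.right_mem {W : Finset V} {u v : V} {n : ℕ} (h : PathIn G W u v n) : v ∈ W := by
  obtain ⟨p, h1, h2, h3⟩ := h
  exact h2 _ p.end_mem_support

lemma PathIn.left_mem {W : Finset V} {u v : V} {n : ℕ} (h : PathIn G W u v n) : u ∈ W :=
  h.symm.right_mem

lemma PathIn.glue {W A B : Finset V} {u v v' w : V} {n m : ℕ} (h : PathIn G A u v n)
    (h' : PathIn G B v' w m) (hd : Disjoint A B) (ha : G.Adj v v') (hA : A ⊆ W) (hB : B ⊆ W) :
    PathIn G W u w (n + m + 1) := by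
  obtain ⟨p, h1, h2, h3⟩ := h
  obtain ⟨q, k1, k2, k3⟩ := h'
  refine ⟨p.append (.cons ha q), ?_, ?_, ?_⟩
  · rw [Walk.isPath_def, Walk.support_append, Walk.support_cons, List.tail_cons,
      List.nodup_append]
    refine ⟨h1.support_nodup, k1.support_nodup, ?_⟩
    rintro a ha b hb rfl
    exact Finset.disjoint_left.1 hd (h2 _ ha) (k2 _ hb)
  · intro z hz
    rw [Walk.support_append, Walk.support_cons, List.tail_cons, List.mem_append] at hz
    rcases hz with hz | hz
    · exact hA (h2 _ hz)
    · exact hB (k2 _ hz)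
  · simp [h3, k3]; omega

/-- A path can be prolonged by one new vertex at its end. -/
lemma PathIn.snoc {W A : Finset V} {u v w : V} {n : ℕ} (h : PathIn G A u v n)
    (hw : w ∉ A) (ha : G.Adj v w) (hA : A ⊆ W) (hB : w ∈ W) :
    PathIn G W u w (n + 1) := by
  have := PathIn.glue (B := {w}) h (PathIn.single (by simp)) (by simpa using hw) ha hA
    (by simpa using hB)
  simpa using this

/-- A path can be prolonged by one new vertex at its start. -/
lemma PathIn.cons {W A : Finset V} {u v w : V} {n : ℕ} (h : PathIn G A u v n)
    (hw : w ∉ A) (ha : G.Adj w u) (hA : A ⊆ W) (hB : w ∈ W) :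
    PathIn G W w v (n + 1) :=
  (h.symm.snoc hw ha.symm hA hB).symm

lemma Adm.mono {W W' S S' T T' : Finset V} {k k' : ℕ} (h : Adm G W S T k) (hW : W ⊆ W')
    (hS : S ⊆ S') (hT : T ⊆ T') (hk : k' ≤ k) : Adm G W' S' T' k' := by
  obtain ⟨a, d, hd, h⟩ := h
  refine ⟨a, d, hd, fun i hi => ?_⟩
  obtain ⟨s, hs, t, ht, hp⟩ := h i (by omega)
  exact ⟨s, hS hs, t, hT ht, hp.mono hW⟩

lemma Adm.symm {W S T : Finset V} {k : ℕ} (h : Adm G W S T k) : Adm G W T S k := by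
  obtain ⟨a, d, hd, h⟩ := h
  refine ⟨a, d, hd, fun i hi => ?_⟩
  obtain ⟨s, hs, t, ht, hp⟩ := h i (by omega)
  exact ⟨t, ht, s, hs, hp.symm⟩

lemma Exits.adm {H S T E : Finset V} {r : ℕ} (h : Exits G H S E r) {e : V} (he : e ∈ E)
    (ht : e ∈ T) : Adm G H S T r := by
  obtain ⟨a, d, hd, h⟩ := h
  refine ⟨a, d, hd, fun i hi => ?_⟩
  obtain ⟨s, hs, hp⟩ := h e he i hi
  exact ⟨s, hs, e, ht, hp⟩

lemma Exits.of_path {H S : Finset V} {s e : V} {n : ℕ} (hs : s ∈ S) (h : PathIn G H s e n) :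
    Exits G H S {e} 1 := by
  refine ⟨n, 1, Or.inl rfl, fun e' he i hi => ⟨s, hs, ?_⟩⟩
  obtain rfl := Finset.mem_singleton.1 he
  obtain rfl : i = 0 := by omega
  simpa using h

/-- The vertices of `E ⊆ S` are exits of rank one, through paths of length zero. -/
lemma Exits.trivial {H S E : Finset V} (hE : E ⊆ S) (hH : E ⊆ H) : Exits G H S E 1 := by
  refine ⟨0, 1, Or.inl rfl, fun e he i hi => ⟨e, hE he, ?_⟩⟩
  obtain rfl : i = 0 := by omega
  simpa using PathIn.single (hH he)

/-- The sum of two arithmetic progressions with `k` and `r` terms and common differences in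
`{1, 2}` contains such a progression with `k + r - 1` terms. -/
lemma ap_sum {L : ℕ → Prop} {a d b e k r : ℕ} (hd : d = 1 ∨ d = 2) (he : e = 1 ∨ e = 2)
    (hk : 1 ≤ k) (hr : 1 ≤ r) (h : ∀ i < k, ∀ j < r, L (a + i * d + (b + j * e) + 1)) :
    ∃ a d, (d = 1 ∨ d = 2) ∧ ∀ i < k + r - 1, L (a + i * d) := by
  have key : ∀ t i j n, i < k → j < r → i * d + j * e = t * n → L (a + b + 1 + t * n) := by
    intro t i j n hi hj hh
    have := h i hi j hj
    rwa [← hh, show a + b + 1 + (i * d + j * e) = a + i * d + (b + j * e) + 1 by ring]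
  rcases hd with rfl | rfl <;> rcases he with rfl | rfl
  · refine ⟨a + b + 1, 1, Or.inl rfl, fun t ht => key t (min t (k - 1)) (t - min t (k - 1)) 1
      ?_ ?_ ?_⟩ <;> omega
  · by_cases h1 : k = 1
    · exact ⟨a + b + 1, 2, Or.inr rfl, fun t ht => key t 0 t 2 (by omega) (by omega) (by omega)⟩
    · refine ⟨a + b + 1, 1, Or.inl rfl, fun t ht => key t (t - 2 * min (t / 2) (r - 1))
        (min (t / 2) (r - 1)) 1 ?_ ?_ ?_⟩ <;> omega
  · by_cases h1 : r = 1
    · exact ⟨a + b + 1, 2, Or.inr rfl, fun t ht => key t t 0 2 (by omega) (by omega) (by omega)⟩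
    · refine ⟨a + b + 1, 1, Or.inl rfl, fun t ht => key t (min (t / 2) (k - 1))
        (t - 2 * min (t / 2) (k - 1)) 1 ?_ ?_ ?_⟩ <;> omega
  · refine ⟨a + b + 1, 2, Or.inr rfl, fun t ht => key t (min t (k - 1)) (t - min t (k - 1)) 2
      ?_ ?_ ?_⟩ <;> omega

/-- Paths leaving `H` through the exits `E` continue through `C`. -/
lemma Exits.glue {W H C S T E : Finset V} {r k : ℕ} (h : Exits G H S E r)
    (h' : Adm G C (nb G E) T k) (hr : 1 ≤ r) (hk : 1 ≤ k) (hd : Disjoint H C)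
    (hH : H ⊆ W) (hC : C ⊆ W) : Adm G W S T (k + r - 1) := by
  obtain ⟨a, d, hd1, h⟩ := h
  obtain ⟨b, e, he, h'⟩ := h'
  refine ap_sum (L := fun n => ∃ s ∈ S, ∃ t ∈ T, PathIn G W s t n) (a := b) (b := a) (d := e)
    (e := d) he hd1 hk hr ?_
  intro i hi j hj
  obtain ⟨c, hc, t, ht, hp⟩ := h' i hi
  obtain ⟨x, hx, hxc⟩ := mem_nb.1 hc
  obtain ⟨s, hs, hq⟩ := h x hx j hj
  refine ⟨s, hs, t, ht, ?_⟩
  have := hq.glue hp hd hxc hH hC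
  rwa [show b + i * e + (a + j * d) + 1 = a + j * d + (b + i * e) + 1 by ring]

/-- `Exits.glue` with the roles of the two terminal sets exchanged. -/
lemma Exits.glue_back {W H C S T E : Finset V} {r k : ℕ} (h : Exits G H T E r)
    (h' : Adm G C S (nb G E) k) (hr : 1 ≤ r) (hk : 1 ≤ k) (hd : Disjoint H C)
    (hH : H ⊆ W) (hC : C ⊆ W) : Adm G W S T (k + r - 1) :=
  (h.glue h'.symm hr hk hd hH hC).symm

/-- Paths to the neighbourhood of `b`, prolonged to `b`. -/
lemma Adm.to_exits {X S : Finset V} {b : V} {r : ℕ} (h : Adm G X S (nb G {b}) r) (hb : b ∉ X) :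
    Exits G (insert b X) S {b} r := by
  obtain ⟨a, d, hd, h⟩ := h
  refine ⟨a + 1, d, hd, fun e he i hi => ?_⟩
  obtain rfl := Finset.mem_singleton.1 he
  obtain ⟨s, hs, t, ht, hp⟩ := h i hi
  refine ⟨s, hs, ?_⟩
  have := hp.snoc (W := insert e X) hb (mem_nb_single.1 ht).symm (Finset.subset_insert _ _)
    (Finset.mem_insert_self _ _)
  rwa [show a + 1 + i * d = a + i * d + 1 by ring]

/-- In a clique, every vertex is the end of paths of all lengths up to the number of vertices minus
one. -/
lemma clique_path (n : ℕ) : ∀ (K : Finset V), (∀ a ∈ K, ∀ b ∈ K, a ≠ b → G.Adj a b) →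
    n < K.card → ∀ e ∈ K, ∃ s ∈ K, PathIn G K s e n := by
  induction n with
  | zero => exact fun K _ _ e he => ⟨e, he, PathIn.single he⟩
  | succ n ih =>
    intro K hK hn e he
    have hc := Finset.card_erase_of_mem he
    obtain ⟨f, hf⟩ : (K.erase e).Nonempty := by
      rw [← Finset.card_pos]; omega
    obtain ⟨s, hs, hp⟩ := ih (K.erase e)
      (fun a ha b hb => hK a (Finset.mem_of_mem_erase ha) b (Finset.mem_of_mem_erase hb))
      (by omega) f hf
    exact ⟨s, Finset.mem_of_mem_erase hs, hp.snoc (by simp)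
      (hK f (Finset.mem_of_mem_erase hf) e he (Finset.ne_of_mem_erase hf))
      (Finset.erase_subset _ _) he⟩

/-- In a complete bipartite graph with sides `A` and `B`, every vertex of `B` is the end of
paths of all even lengths up to the obvious bound that start in `B`. -/
lemma bip_path (n : ℕ) : ∀ (A B : Finset V), (∀ a ∈ A, ∀ b ∈ B, G.Adj a b) →
    n < B.card → n ≤ A.card → ∀ e ∈ B, ∃ s ∈ B, PathIn G (B ∪ A) s e (2 * n) := by
  induction n with
  | zero => exact fun A B _ _ _ e he => ⟨e, he, PathIn.single (Finset.mem_union_left _ he)⟩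
  | succ n ih =>
    intro A B hK hn hA e he
    have hc := Finset.card_erase_of_mem he
    obtain ⟨f, hf⟩ : (B.erase e).Nonempty := by
      rw [← Finset.card_pos]; omega
    obtain ⟨a, ha⟩ : A.Nonempty := by
      rw [← Finset.card_pos]; omega
    have hc2 := Finset.card_erase_of_mem ha
    obtain ⟨s, hs, hp⟩ := ih (A.erase a) (B.erase e)
      (fun a ha b hb => hK a (Finset.mem_of_mem_erase ha) b (Finset.mem_of_mem_erase hb))
      (by omega) (by omega) f hf
    have hfB := Finset.mem_of_mem_erase hf
    have haB : a ∉ B := fun h => G.loopless.irrefl _ (hK a ha a h)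
    have heA : e ∉ A := fun h => G.loopless.irrefl _ (hK e h e he)
    refine ⟨s, Finset.mem_of_mem_erase hs, ?_⟩
    have h1 := hp.snoc (w := a) (W := (B.erase e) ∪ A) (by simp [haB]) (hK a ha f hfB).symm
      (Finset.union_subset_union_right (Finset.erase_subset _ _)) (Finset.mem_union_right _ ha)
    have h2 := h1.snoc (w := e) (W := B ∪ A) (by simp [heA]) (hK a ha e he)
      (Finset.union_subset_union_left (Finset.erase_subset _ _)) (Finset.mem_union_left _ he)
    exact h2

lemma bip_path_odd {n : ℕ} {A B : Finset V} (hAB : ∀ a ∈ A, ∀ b ∈ B, G.Adj a b)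
    (hn : n < B.card) (hA : n < A.card) {a : V} (ha : a ∈ A) :
    ∃ s ∈ B, PathIn G (B ∪ A) s a (2 * n + 1) := by
  obtain ⟨f, hf⟩ : B.Nonempty := by
    rw [← Finset.card_pos]; omega
  have hc2 := Finset.card_erase_of_mem ha
  have haB : a ∉ B := fun h => G.loopless.irrefl _ (hAB a ha a h)
  obtain ⟨s, hs, hp⟩ := bip_path n (A.erase a) B
    (fun a ha b hb => hAB a (Finset.mem_of_mem_erase ha) b hb) hn (by omega) f hf
  exact ⟨s, hs, hp.snoc (by simp [haB]) (hAB a ha f hf).symm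
    (Finset.union_subset_union_right (Finset.erase_subset _ _)) (Finset.mem_union_right _ ha)⟩

/-! ### Closed sets, connected sets and components -/

/-- `A` is closed under taking neighbours inside `W`; for `A ⊆ W` this says that `A` is a union
of components of the subgraph induced by `W`. -/
def Cl (G : SimpleGraph V) (W A : Finset V) : Prop :=
  ∀ a ∈ A, ∀ w ∈ W, G.Adj a w → w ∈ A

/-- The subgraph induced by `W` has at most one component. -/
def Conn (G : SimpleGraph V) (W : Finset V) : Prop :=
  ∀ A ⊆ W, A.Nonempty → Cl G W A → A = W

open Classical in
/-- The component of `t` in the subgraph induced by `U`: the least closed set containing `t`. -/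
noncomputable def comp (G : SimpleGraph V) (U : Finset V) (t : V) : Finset V :=
  U.filter fun v => ∀ A ⊆ U, t ∈ A → Cl G U A → v ∈ A

lemma Cl.compl {W A : Finset V} (h : Cl G W A) : Cl G W (W \ A) := by
  intro a ha w hw haw
  rw [Finset.mem_sdiff] at ha ⊢
  exact ⟨hw, fun hwA => ha.2 (h w hwA a ha.1 haw.symm)⟩

lemma Cl.trans {W A B : Finset V} (h : Cl G W A) (h' : Cl G A B) (hB : B ⊆ A) : Cl G W B :=
  fun b hb w hw hbw => h' b hb w (h b (hB hb) w hw hbw) hbw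

lemma comp_subset {U : Finset V} {t : V} : comp G U t ⊆ U := by
  classical
  exact Finset.filter_subset _ _

lemma self_mem_comp {U : Finset V} {t : V} (ht : t ∈ U) : t ∈ comp G U t := by
  classical
  simp only [comp, Finset.mem_filter]
  exact ⟨ht, fun A _ h _ => h⟩

lemma comp_cl {U : Finset V} {t : V} : Cl G U (comp G U t) := by
  intro a ha w hw haw
  simp only [comp, Finset.mem_filter] at ha ⊢
  exact ⟨hw, fun A hA ht hc => hc a (ha.2 A hA ht hc) w hw haw⟩

lemma comp_min {U A : Finset V} {t : V} (hA : A ⊆ U) (ht : t ∈ A) (hc : Cl G U A) :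
    comp G U t ⊆ A := by
  intro v hv
  simp only [comp, Finset.mem_filter] at hv
  exact hv.2 A hA ht hc

lemma comp_conn {U : Finset V} {t : V} (htU : t ∈ U) : Conn G (comp G U t) := by
  intro A hA hne hc
  have hcU : Cl G U A := comp_cl.trans hc hA
  by_cases ht : t ∈ A
  · exact hA.antisymm (comp_min (hA.trans comp_subset) ht hcU)
  · exfalso
    obtain ⟨a, ha⟩ := hne
    have := comp_min (t := t) Finset.sdiff_subset (by simp [ht, htU])
      (hcU.compl) (hA ha)
    simp [ha] at this

lemma Conn.exists_adj {W A : Finset V} (h : Conn G W) (hA : A ⊆ W) (hne : A.Nonempty)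
    (hAW : A ≠ W) : ∃ a ∈ A, ∃ w ∈ W, w ∉ A ∧ G.Adj a w := by
  by_contra hc
  push Not at hc
  refine hAW (h A hA hne fun a ha w hw haw => ?_)
  by_contra hwA
  exact hc a ha w hw hwA haw

/-- In a connected set, removing a vertex `u` together with components of the rest other than
all of them leaves a connected set. -/
lemma Conn.sdiff {C A : Finset V} {u : V} (h : Conn G C) (hu : u ∈ C) (hA : A ⊆ C.erase u)
    (hcl : Cl G (C.erase u) A) : Conn G (C \ A) := by
  intro B hB hne hc
  have huA : u ∉ A := fun h => by simpa using hA h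
  by_cases huB : u ∈ B
  · have hBA : B ∪ A = C := by
      refine h _ (Finset.union_subset (hB.trans Finset.sdiff_subset)
        (hA.trans (Finset.erase_subset _ _))) (hne.mono Finset.subset_union_left) ?_
      intro b hb w hw hbw
      rw [Finset.mem_union] at hb ⊢
      by_cases hwA : w ∈ A
      · exact Or.inr hwA
      · rcases hb with hb | hb
        · exact Or.inl (hc b hb w (by simp [hw, hwA]) hbw)
        · by_cases hwu : w = u
          · exact Or.inl (hwu ▸ huB)
          · exact Or.inr (hcl b hb w (by simp [hw, hwu]) hbw)
    refine hB.antisymm fun x hx => ?_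
    rw [Finset.mem_sdiff, ← hBA, Finset.mem_union] at hx
    tauto
  · exfalso
    have : B = C := by
      refine h _ (hB.trans Finset.sdiff_subset) hne ?_
      intro b hb w hw hbw
      have hb' := Finset.mem_sdiff.1 (hB hb)
      refine hc b hb w (Finset.mem_sdiff.2 ⟨hw, fun hwA => hb'.2 ?_⟩) hbw
      exact hcl w hwA b (Finset.mem_erase.2 ⟨fun h => huB (h ▸ hb), hb'.1⟩) hbw.symm
    exact huB (this ▸ hu)

lemma PathIn.extend {W : Finset V} {u v w : V} {n : ℕ} (h : PathIn G W u v n) (hw : w ∈ W)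
    (hvw : G.Adj v w) : ∃ m, PathIn G W u w m := by
  obtain ⟨p, h1, h2, h3⟩ := h
  refine ⟨_, (p.concat hvw).bypass, Walk.bypass_isPath _, fun z hz => ?_, rfl⟩
  have := Walk.support_bypass_subset_support _ hz
  rw [Walk.support_concat] at this
  simp only [List.mem_append, List.mem_singleton] at this
  rcases this with h | rfl
  · exact h2 _ h
  · exact hw

lemma Conn.path {W : Finset V} (h : Conn G W) {u v : V} (hu : u ∈ W) (hv : v ∈ W) :
    ∃ n, PathIn G W u v n := by
  classical
  have : (W.filter fun v => ∃ n, PathIn G W u v n) = W := by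
    refine h _ (Finset.filter_subset _ _)
      ⟨u, Finset.mem_filter.2 ⟨hu, 0, PathIn.single hu⟩⟩ ?_
    intro a ha w hw haw
    obtain ⟨_, n, hn⟩ := Finset.mem_filter.1 ha
    exact Finset.mem_filter.2 ⟨hw, hn.extend hw haw⟩
  rw [← this] at hv
  exact (Finset.mem_filter.1 hv).2

lemma Conn.exits {C T : Finset V} (h : Conn G C) {u t : V} (hu : u ∈ C) (ht : t ∈ C)
    (htT : t ∈ T) : Exits G C T {u} 1 := by
  obtain ⟨n, hn⟩ := h.path ht hu
  exact Exits.of_path htT hn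

lemma Conn.adm {C S T : Finset V} (h : Conn G C) {s t : V} (hs : s ∈ C) (ht : t ∈ C)
    (hsS : s ∈ S) (htT : t ∈ T) : Adm G C S T 1 :=
  (h.exits ht hs hsS).adm (by simp) htT

/-! ### Rooted connectivity and degrees -/

/-- The rooted graph obtained from the subgraph induced by `W` by adding two roots with
neighbourhoods `S` and `T` has the connectivity needed: every component of `W` is seen by both
roots (`c1`), and every component of `W` minus a vertex is seen by at least one root (`c2`). -/
structure RC (G : SimpleGraph V) (W S T : Finset V) : Prop where
  ne : W.Nonempty
  c1 : ∀ A ⊆ W, A.Nonempty → Cl G W A → (∃ s ∈ A, s ∈ S) ∧ (∃ t ∈ A, t ∈ T)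
  c2 : ∀ b ∈ W, ∀ A ⊆ W.erase b, A.Nonempty → Cl G (W.erase b) A → ∃ s ∈ A, s ∈ S ∨ s ∈ T

/-- The degree of `v` in the subgraph induced by `W` with the two roots attached to `S` and `T`. -/
def dg (G : SimpleGraph V) [DecidableRel G.Adj] (W S T : Finset V) (v : V) : ℕ :=
  (W.filter (G.Adj v)).card + (if v ∈ S then 1 else 0) + (if v ∈ T then 1 else 0)

lemma RC.symm {W S T : Finset V} (h : RC G W S T) : RC G W T S :=
  ⟨h.ne, fun A hA hn hc => (h.c1 A hA hn hc).symm, fun b hb A hA hn hc => by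
    obtain ⟨s, hs, h⟩ := h.c2 b hb A hA hn hc
    exact ⟨s, hs, h.symm⟩⟩

lemma dg_symm {W S T : Finset V} {v : V} : dg G W S T v = dg G W T S v := by
  unfold dg; omega

lemma RC.of_closed {W S T A : Finset V} (h : RC G W S T) (hA : A ⊆ W) (hn : A.Nonempty)
    (hc : Cl G W A) : RC G A S T := by
  refine ⟨hn, fun B hB hBn hBc => h.c1 B (hB.trans hA) hBn (hc.trans hBc hB),
    fun b hb B hB hBn hBc => h.c2 b (hA hb) B (hB.trans (Finset.erase_subset_erase _ hA)) hBn ?_⟩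
  intro x hx w hw hxw
  rw [Finset.mem_erase] at hw
  exact hBc x hx w (Finset.mem_erase.2 ⟨hw.1, hc x (Finset.mem_of_mem_erase (hB hx)) w hw.2 hxw⟩)
    hxw

lemma RC.congr {W S T S' T' : Finset V} (h : RC G W S T) (hS : ∀ v ∈ W, v ∈ S → v ∈ S')
    (hT : ∀ v ∈ W, v ∈ T → v ∈ T') : RC G W S' T' := by
  refine ⟨h.ne, fun A hA hn hc => ?_, fun b hb A hA hn hc => ?_⟩
  · obtain ⟨⟨s, hs, hsS⟩, t, ht, htT⟩ := h.c1 A hA hn hc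
    exact ⟨⟨s, hs, hS s (hA hs) hsS⟩, t, ht, hT t (hA ht) htT⟩
  · obtain ⟨s, hs, hsS⟩ := h.c2 b hb A hA hn hc
    have hsW := Finset.mem_of_mem_erase (hA hs)
    exact ⟨s, hs, hsS.imp (hS s hsW) (hT s hsW)⟩

/-- A lower bound for the degree after passing to a smaller rooted graph: `R` collects the
neighbours that are lost. -/
lemma dg_le {W S T A X Y R : Finset V} {v : V} {l : ℕ}
    (h : ∀ w ∈ W, G.Adj v w → w ∈ A ∨ w ∈ R)
    (hl : R.card + (if v ∈ S then 1 else 0) + (if v ∈ T then 1 else 0)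
      ≤ l + (if v ∈ X then 1 else 0) + (if v ∈ Y then 1 else 0)) :
    dg G W S T v ≤ dg G A X Y v + l := by
  have h1 : (W.filter (G.Adj v)).card ≤ (A.filter (G.Adj v)).card + R.card := by
    refine le_trans (Finset.card_le_card ?_) (Finset.card_union_le _ _)
    intro w hw
    simp only [Finset.mem_filter, Finset.mem_union] at hw ⊢
    rcases h w hw.1 hw.2 with h | h
    · exact Or.inl ⟨h, hw.2⟩
    · exact Or.inr h
  unfold dg
  omega

lemma dg_of_closed {W S T A : Finset V} (hc : Cl G W A) {v : V} (hv : v ∈ A) :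
    dg G W S T v ≤ dg G A S T v :=
  dg_le (l := 0) (R := ∅) (fun w hw h => Or.inl (hc v hv w hw h)) (by simp)

/-- Passing to one side `A` of a cut vertex `b`, when `A` avoids `T`. -/
lemma RC.cut {W S T A : Finset V} {b : V} (hW : Conn G W) (h : RC G W S T) (hb : b ∈ W)
    (hA : A ⊆ W.erase b) (hn : A.Nonempty) (hc : Cl G (W.erase b) A) (hT : ∀ v ∈ A, v ∉ T) :
    RC G A S (nb G {b}) ∧ A.card < W.card ∧
      (∀ v ∈ A, dg G W S T v ≤ dg G A S (nb G {b}) v) ∧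
      (∀ k, 1 ≤ k → Adm G A S (nb G {b}) k → Adm G W S T k) := by
  have hAW : A ⊆ W := hA.trans (Finset.erase_subset _ _)
  have hbA : b ∉ A := fun h => by simpa using hA h
  refine ⟨⟨hn, ?_, ?_⟩, ?_, ?_, ?_⟩
  · intro X hX hXn hXc
    constructor
    · obtain ⟨s, hs, hsST⟩ := h.c2 b hb X (hX.trans hA) hXn (hc.trans hXc hX)
      exact ⟨s, hs, hsST.resolve_right (hT s (hX hs))⟩
    · by_contra hcon
      push Not at hcon
      have : X = W := by
        refine hW X (hX.trans hAW) hXn ?_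
        intro x hx w hw hxw
        by_cases hwb : w = b
        · exact absurd (mem_nb_single.2 (hwb ▸ hxw.symm)) (hcon x hx)
        · exact hc.trans hXc hX x hx w (by simp [hw, hwb]) hxw
      exact hbA (hX (this ▸ hb))
  · intro b' hb' X hX hXn hXc
    by_contra hcon
    push Not at hcon
    have hXA : X ⊆ A := hX.trans (Finset.erase_subset _ _)
    obtain ⟨s, hs, hsST⟩ := h.c2 b' (hAW hb') X (hX.trans (Finset.erase_subset_erase _ hAW)) hXn (by
      intro x hx w hw hxw
      rw [Finset.mem_erase] at hw
      by_cases hwb : w = b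
      · exact absurd (mem_nb_single.2 (hwb ▸ hxw.symm)) (hcon x hx).2
      · exact hXc x hx w (Finset.mem_erase.2
          ⟨hw.1, hc x (hXA hx) w (by simp [hw.2, hwb]) hxw⟩) hxw)
    exact hsST.elim (hcon s hs).1 (hT s (hXA hs))
  · exact Finset.card_lt_card ⟨hAW, fun hWA => hbA (hWA hb)⟩
  · intro v hv
    have hvT := hT v hv
    by_cases hvb : G.Adj v b
    · refine dg_le (l := 0) (R := {b}) (fun w hw hvw => ?_) ?_
      · by_cases hwb : w = b
        · simp [hwb]
        · exact Or.inl (hc v hv w (by simp [hw, hwb]) hvw)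
      · simp [hvT, mem_nb_single, hvb.symm]; omega
    · refine dg_le (l := 0) (R := ∅) (fun w hw hvw => ?_) ?_
      · by_cases hwb : w = b
        · exact absurd (hwb ▸ hvw) hvb
        · exact Or.inl (hc v hv w (by simp [hw, hwb]) hvw)
      · simp [hvT]
  · intro k hk hadm
    obtain ⟨t, ht, htT⟩ := (h.c1 W le_rfl h.ne (fun _ _ w hw _ => hw)).2
    have hE : Exits G (W \ A) T {b} 1 :=
      (hW.sdiff hb hA hc).exits (by simp [hb, hbA]) (by
        rw [Finset.mem_sdiff]; exact ⟨ht, fun h => hT t h htT⟩) htT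
    have := hE.glue_back (W := W) hadm le_rfl hk Finset.sdiff_disjoint Finset.sdiff_subset hAW
    simpa using this

/-! ### Two paths -/

/-- If `t` lies outside `E`, its component in `W \ E` is seen by `E`. -/
lemma Conn.comp_nb {W E : Finset V} (h : Conn G W) {t e : V} (ht : t ∈ W \ E)
    (heW : e ∈ W) (he : e ∈ E) : ∃ c ∈ comp G (W \ E) t, ∃ f ∈ W, f ∈ E ∧ G.Adj f c := by
  have hsub : comp G (W \ E) t ⊆ W := comp_subset.trans Finset.sdiff_subset
  obtain ⟨c, hc, w, hw, hwc, hcw⟩ := h.exists_adj hsub ⟨t, self_mem_comp ht⟩ (by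
    intro heq
    have := comp_subset (heq.symm ▸ heW : e ∈ comp G (W \ E) t)
    simp [he] at this)
  refine ⟨c, hc, w, hw, ?_, hcw.symm⟩
  by_contra hwE
  exact hwc (comp_cl c hc w (by simp [hw, hwE]) hcw)

/-- Exits of rank `r` that lie in a connected set meeting `T` give `r` paths to `T`. -/
lemma Exits.reach {W W' H S T E : Finset V} {r : ℕ} (h : Exits G H S E r) (hr : 1 ≤ r)
    (hW' : Conn G W') (hH : H ⊆ W) (hW : W' ⊆ W) (hHE : ∀ v ∈ H, v ∈ W' → v ∈ E)
    (hE : ∃ e ∈ E, e ∈ W') (hT : ∃ t ∈ T, t ∈ W') : Adm G W S T r := by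
  obtain ⟨t, htT, htW⟩ := hT
  obtain ⟨e, he, heW⟩ := hE
  by_cases ht : t ∈ E
  · exact (h.adm ht htT).mono hH le_rfl le_rfl le_rfl
  · have ht' : t ∈ W' \ E := by simp [ht, htW]
    obtain ⟨c, hc, f, -, hf, hfc⟩ := hW'.comp_nb ht' heW he
    have hadm : Adm G (comp G (W' \ E) t) (nb G E) T 1 :=
      (comp_conn ht').adm hc (self_mem_comp ht') (mem_nb.2 ⟨f, hf, hfc⟩) htT
    have := h.glue (W := W) hadm hr le_rfl ?_ hH
      ((comp_subset.trans Finset.sdiff_subset).trans hW)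
    · simpa using this
    · rw [Finset.disjoint_left]
      intro v hv hvC
      have := Finset.mem_sdiff.1 (comp_subset hvC)
      exact this.2 (hHE v hv this.1)

/-- No component of `W` minus a vertex is missed by one of the two roots. -/
def Full (G : SimpleGraph V) (W S T : Finset V) : Prop :=
  ∀ b ∈ W, ∀ A ⊆ W.erase b, A.Nonempty → Cl G (W.erase b) A →
    (∃ s ∈ A, s ∈ S) ∧ (∃ t ∈ A, t ∈ T)

lemma Full.symm {W S T : Finset V} (h : Full G W S T) : Full G W T S :=
  fun b hb A hA hn hc => (h b hb A hA hn hc).symm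

/-- An edge spanned by `S` gives two paths: both its ends can be reached from `S` by paths of lengths
`0` and `1`. -/
lemma adm_two_of_adj {W S T : Finset V} (hW : Conn G W) (hT : ∃ t ∈ T, t ∈ W) {s₁ s₂ : V}
    (h1 : s₁ ∈ S) (h2 : s₂ ∈ S) (h1W : s₁ ∈ W) (h2W : s₂ ∈ W) (h : G.Adj s₁ s₂) :
    Adm G W S T 2 := by
  have hsub : {s₁, s₂} ⊆ S := by simp [Finset.insert_subset_iff, h1, h2]
  have hE : Exits G {s₁, s₂} S {s₁, s₂} 2 := by
    refine ⟨0, 1, Or.inl rfl, fun e he i hi => ?_⟩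
    obtain ⟨s, hs, hp⟩ := clique_path (G := G) i {s₁, s₂} (by
      intro a ha b hb hab
      simp only [Finset.mem_insert, Finset.mem_singleton] at ha hb
      rcases ha with rfl | rfl <;> rcases hb with rfl | rfl <;> simp_all [G.adj_comm])
      (by rw [Finset.card_pair h.ne]; exact hi) e he
    exact ⟨s, hsub hs, by simpa using hp⟩
  exact hE.reach (W := W) (by norm_num) hW (by simp [Finset.insert_subset_iff, h1W, h2W]) le_rfl
    (fun v hv _ => hv) ⟨s₁, by simp, h1W⟩ hT

/-- Two members of `S` with a common neighbour `a` give two paths: both can be reached from `S` by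
paths of lengths `0` and `2`, and after removing `a` they are still connected to `T`. -/
lemma adm_two_of_common_nbr {W S T : Finset V} (hF : Full G W S T) {a b₁ b₂ : V}
    (h1 : b₁ ∈ S) (h2 : b₂ ∈ S) (h1W : b₁ ∈ W) (h2W : b₂ ∈ W) (haW : a ∈ W) (hne : b₁ ≠ b₂)
    (ha1 : G.Adj a b₁) (ha2 : G.Adj a b₂) :
    Adm G W S T 2 := by
  have hsub : {b₁, b₂} ⊆ S := by simp [Finset.insert_subset_iff, h1, h2]
  have hE : Exits G ({b₁, b₂} ∪ {a}) S {b₁, b₂} 2 := by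
    refine ⟨0, 2, Or.inr rfl, fun e he i hi => ?_⟩
    obtain ⟨s, hs, hp⟩ := bip_path (G := G) i {a} {b₁, b₂} (by
      intro x hx b hb
      simp only [Finset.mem_insert, Finset.mem_singleton] at hx hb
      rcases hb with rfl | rfl <;> simp_all)
      (by rw [Finset.card_pair hne]; exact hi) (by simp; omega) e he
    exact ⟨s, hsub hs, by simpa [mul_comm] using hp⟩
  have hb1 : b₁ ∈ W.erase a := by simp [h1W, ha1.ne']
  have hsubC : comp G (W.erase a) b₁ ⊆ W.erase a := comp_subset
  obtain ⟨t, ht, htT⟩ := (hF a haW _ hsubC ⟨_, self_mem_comp hb1⟩ comp_cl).2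
  refine hE.reach (W := W) (by norm_num) (comp_conn hb1) ?_
    (hsubC.trans (Finset.erase_subset _ _)) ?_ ⟨b₁, by simp, self_mem_comp hb1⟩ ⟨t, htT, ht⟩
  · simp [Finset.insert_subset_iff, h1W, h2W, haW]
  · intro v hv hvC
    have := hsubC hvC
    simp only [Finset.mem_union, Finset.mem_singleton] at hv
    rcases hv with hv | rfl
    · exact hv
    · simp at this

/-- The two-path statement for rooted graphs with fewer than `n` vertices: if all degrees but
that of one exempt vertex `z` are at least `3`, there are two admissible paths. -/
def TwoPaths (G : SimpleGraph V) [DecidableRel G.Adj] (n : ℕ) : Prop :=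
  ∀ (W S T : Finset V) (z : V), W.card < n → RC G W S T → (∃ v ∈ W, v ≠ z) →
    (∀ v ∈ W, v ≠ z → 3 ≤ dg G W S T v) → Adm G W S T 2

/-- If each vertex has at most one neighbour in `S`, the loss of the neighbours in `S` is made up for
by membership in one of the new terminal sets. -/
lemma card_nbrs_le_one {W S X Y : Finset V} {v : V}
    (hSC : ∀ a ∈ W, ∀ b₁ ∈ S, ∀ b₂ ∈ S, G.Adj a b₁ → G.Adj a b₂ → b₁ = b₂) (hv : v ∈ W)
    (h : ∀ s ∈ S, G.Adj s v → v ∈ X ∨ v ∈ Y) :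
    (S.filter (G.Adj v)).card ≤ (if v ∈ X then 1 else 0) + (if v ∈ Y then 1 else 0) := by
  have h1 : (S.filter (G.Adj v)).card ≤ 1 := by
    rw [Finset.card_le_one]
    intro b₁ hb1 b₂ hb2
    rw [Finset.mem_filter] at hb1 hb2
    exact hSC v hv b₁ hb1.1 b₂ hb2.1 hb1.2 hb2.2
  rcases Finset.eq_empty_or_nonempty (S.filter (G.Adj v)) with h0 | ⟨s, hs⟩
  · simp [h0]
  · rw [Finset.mem_filter] at hs
    rcases h s hs.1 hs.2.symm with h | h <;> simp only [h, if_true] <;> omega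

/-- Neighbours of a component of `W \ E` are in the component or in `E`. -/
lemma comp_sdiff_nbr {W E : Finset V} {t v w : V} (hv : v ∈ comp G (W \ E) t) (hw : w ∈ W)
    (h : G.Adj v w) : w ∈ comp G (W \ E) t ∨ w ∈ E := by
  by_cases hE : w ∈ E
  · exact Or.inr hE
  · exact Or.inl (comp_cl v hv w (by simp [hw, hE]) h)

/-- Some terminal `t ∈ T` lies outside `S`. Its component in `W \ S`, rooted at the neighbourhood of
`S`, has the same degrees, since no vertex has two neighbours in `S`. -/
lemma two_paths_of_not_subset {W S T : Finset V} {z t : V} (ih : TwoPaths G W.card)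
    (hW : Conn G W) (hF : Full G W S T) (hSW : S ⊆ W) (hS : S.Nonempty)
    (hSC : ∀ a ∈ W, ∀ b₁ ∈ S, ∀ b₂ ∈ S, G.Adj a b₁ → G.Adj a b₂ → b₁ = b₂)
    (hdeg : ∀ v ∈ W, v ≠ z → 3 ≤ dg G W S T v) (htW : t ∈ W) (htT : t ∈ T) (htS : t ∉ S) :
    Adm G W S T 2 := by
  obtain ⟨s, hs⟩ := hS
  have ht : t ∈ W \ S := by simp [htW, htS]
  set C := comp G (W \ S) t with hC
  have htC : t ∈ C := self_mem_comp ht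
  have hCW : C ⊆ W := comp_subset.trans Finset.sdiff_subset
  have hCS : ∀ v ∈ C, v ∉ S := fun v hv => (Finset.mem_sdiff.1 (comp_subset hv)).2
  obtain ⟨c, hc, f, hfW, hfS, hfc⟩ := hW.comp_nb ht (hSW hs) hs
  have hlt : C.card < W.card :=
    Finset.card_lt_card ⟨hCW, fun h => hCS s (h (hSW hs)) hs⟩
  have hadm : Adm G C (nb G S) T 2 := by
    refine ih C (nb G S) T z hlt ⟨⟨t, htC⟩, ?_, ?_⟩ ?_ ?_
    · intro X hX hn hcl
      rw [comp_conn ht X hX hn hcl]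
      exact ⟨⟨c, hc, mem_nb.2 ⟨f, hfS, hfc⟩⟩, t, htC, htT⟩
    · intro b hb X hX hn hcl
      by_contra hcon
      push Not at hcon
      obtain ⟨t', ht', htT'⟩ := (hF b (hCW hb) X (hX.trans (Finset.erase_subset_erase _ hCW)) hn (by
        intro x hx w hw hxw
        rw [Finset.mem_erase] at hw
        rcases comp_sdiff_nbr (Finset.mem_of_mem_erase (hX hx)) hw.2 hxw with h | h
        · exact hcl x hx w (Finset.mem_erase.2 ⟨hw.1, h⟩) hxw
        · exact absurd (mem_nb.2 ⟨w, h, hxw.symm⟩) (hcon x hx).1)).2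
      exact (hcon t' ht').2 htT'
    · by_contra hcon
      push Not at hcon
      have hcl : Cl G (W.erase f) C := by
        intro x hx w hw hxw
        rw [Finset.mem_erase] at hw
        rcases comp_sdiff_nbr hx hw.2 hxw with h | h
        · exact h
        · have hxc : x = c := (hcon x hx).trans (hcon c hc).symm
          exact absurd (hSC x (hCW hx) w h f hfS hxw (hxc ▸ hfc.symm)) hw.1
      obtain ⟨s', hs', hsS'⟩ := (hF f hfW C (fun v hv => Finset.mem_erase.2
        ⟨fun h => hCS v hv (h ▸ hfS), hCW hv⟩) ⟨t, htC⟩ hcl).1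
      exact hCS s' hs' hsS'
    · intro v hv hvz
      refine (hdeg v (hCW hv) hvz).trans (dg_le (l := 0) (R := S.filter (G.Adj v)) ?_ ?_)
      · intro w hw hvw
        exact (comp_sdiff_nbr hv hw hvw).imp id fun h => by simp [h, hvw]
      · have := card_nbrs_le_one (X := nb G S) (Y := ∅) hSC (hCW hv)
          (fun s hs h => Or.inl (mem_nb.2 ⟨s, hs, h⟩))
        simp [hCS v hv] at this ⊢
        omega
  have := (Exits.trivial (H := S) (le_refl S) le_rfl).glue (W := W) hadm le_rfl (by norm_num)
    (Finset.disjoint_left.2 fun v hv hvC => hCS v hvC hv) hSW hCW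
  simpa using this

/-- The terminal sets coincide. A component of `W \ S` is rooted at the neighbourhoods of one member
`f` of `S` that sees it and of the other members of `S`. -/
lemma two_paths_of_eq {W S : Finset V} {z : V} (ih : TwoPaths G W.card)
    (hW : Conn G W) (hF : Full G W S S) (hSW : S ⊆ W) (hS : S.Nonempty)
    (hSI : ∀ s₁ ∈ S, ∀ s₂ ∈ S, ¬ G.Adj s₁ s₂)
    (hSC : ∀ a ∈ W, ∀ b₁ ∈ S, ∀ b₂ ∈ S, G.Adj a b₁ → G.Adj a b₂ → b₁ = b₂)
    (hz : ∃ v ∈ W, v ≠ z)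
    (hdeg : ∀ v ∈ W, v ≠ z → 3 ≤ dg G W S S v) : Adm G W S S 2 := by
  obtain ⟨s, hs⟩ := hS
  obtain ⟨t, ht⟩ : (W \ S).Nonempty := by
    rw [Finset.nonempty_iff_ne_empty, ne_eq, Finset.sdiff_eq_empty_iff_subset]
    intro hWS
    obtain ⟨v, hv, hvz⟩ := hz
    have h3 := hdeg v hv hvz
    have h0 : W.filter (G.Adj v) = ∅ :=
      Finset.filter_eq_empty_iff.2 fun w hw => hSI v (hWS hv) w (hWS hw)
    simp [dg, h0, hWS hv] at h3
  set C := comp G (W \ S) t with hC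
  have htC : t ∈ C := self_mem_comp ht
  have hCW : C ⊆ W := comp_subset.trans Finset.sdiff_subset
  have hCS : ∀ v ∈ C, v ∉ S := fun v hv => (Finset.mem_sdiff.1 (comp_subset hv)).2
  obtain ⟨c, hc, f, hfW, hfS, hfc⟩ := hW.comp_nb ht (hSW hs) hs
  have hlt : C.card < W.card :=
    Finset.card_lt_card ⟨hCW, fun h => hCS s (h (hSW hs)) hs⟩
  have hfC : f ∉ C := fun h => hCS f h hfS
  obtain ⟨c', hc', hc'n⟩ : ∃ c' ∈ C, c' ∈ nb G (S.erase f) := by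
    by_contra hcon
    push Not at hcon
    obtain ⟨s', hs', hsS'⟩ := (hF f hfW C (fun v hv => Finset.mem_erase.2
        ⟨fun h => hCS v hv (h ▸ hfS), hCW hv⟩) ⟨t, htC⟩ (by
      intro x hx w hw hxw
      rw [Finset.mem_erase] at hw
      rcases comp_sdiff_nbr hx hw.2 hxw with h | h
      · exact h
      · exact absurd (mem_nb.2 ⟨w, by simp [h, hw.1], hxw.symm⟩) (hcon x hx))).1
    exact hCS s' hs' hsS'
  have hcc' : c ≠ c' := by
    rintro rfl
    obtain ⟨g, hg, hgc⟩ := mem_nb.1 hc'n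
    rw [Finset.mem_erase] at hg
    exact hg.1 (hSC c (hCW hc) g hg.2 f hfS hgc.symm hfc.symm)
  have hadm : Adm G C (nb G {f}) (nb G (S.erase f)) 2 := by
    refine ih C _ _ z hlt ⟨⟨t, htC⟩, ?_, ?_⟩ ?_ ?_
    · intro X hX hn hcl
      rw [comp_conn ht X hX hn hcl]
      exact ⟨⟨c, hc, mem_nb_single.2 hfc⟩, c', hc', hc'n⟩
    · intro b hb X hX hn hcl
      by_contra hcon
      push Not at hcon
      obtain ⟨t', ht', htT'⟩ := (hF b (hCW hb) X (hX.trans (Finset.erase_subset_erase _ hCW)) hn (by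
        intro x hx w hw hxw
        rw [Finset.mem_erase] at hw
        rcases comp_sdiff_nbr (Finset.mem_of_mem_erase (hX hx)) hw.2 hxw with h | h
        · exact hcl x hx w (Finset.mem_erase.2 ⟨hw.1, h⟩) hxw
        · by_cases hwf : w = f
          · exact absurd (mem_nb_single.2 (hwf ▸ hxw.symm)) (hcon x hx).1
          · exact absurd (mem_nb.2 ⟨w, by simp [h, hwf], hxw.symm⟩) (hcon x hx).2)).2
      exact hCS t' (Finset.mem_of_mem_erase (hX ht')) htT'
    · by_cases h : c = z
      · exact ⟨c', hc', fun h' => hcc' (h.trans h'.symm)⟩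
      · exact ⟨c, hc, h⟩
    · intro v hv hvz
      refine (hdeg v (hCW hv) hvz).trans (dg_le (l := 0) (R := S.filter (G.Adj v)) ?_ ?_)
      · intro w hw hvw
        exact (comp_sdiff_nbr hv hw hvw).imp id fun h => by simp [h, hvw]
      · have := card_nbrs_le_one (X := nb G {f}) (Y := nb G (S.erase f)) hSC (hCW hv)
          (fun s hs h => by
            by_cases hsf : s = f
            · exact Or.inl (mem_nb_single.2 (hsf ▸ h))
            · exact Or.inr (mem_nb.2 ⟨s, by simp [hs, hsf], h⟩))
        simp only [hCS v hv, if_false]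
        omega
  have h1 : Adm G (insert f C) S (nb G (S.erase f)) 2 := by
    have := (Exits.trivial (S := S) (E := {f}) (H := {f}) (by simpa using hfS) le_rfl).glue
      (W := insert f C) hadm le_rfl (by norm_num) (by simpa using hfC) (by simp)
      (Finset.subset_insert _ _)
    simpa using this
  have := (Exits.trivial (S := S) (E := S.erase f) (H := S.erase f)
      (Finset.erase_subset _ _) le_rfl).glue_back (W := W) h1 le_rfl (by norm_num)
    (Finset.disjoint_left.2 fun v hv hvC => by
      rw [Finset.mem_erase] at hv
      rcases Finset.mem_insert.1 hvC with h | h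
      · exact hv.1 h
      · exact hCS v h hv.2)
    ((Finset.erase_subset _ _).trans hSW) (Finset.insert_subset hfW hCW)
  simpa using this

/-- Without a cut vertex that separates a part from one of the roots: an edge in a terminal set, or
two terminals of one kind with a common neighbour, give two paths directly, and otherwise each
terminal set can be removed. -/
lemma two_paths_of_full {W S T : Finset V} {z : V} (ih : TwoPaths G W.card)
    (hW : Conn G W) (hF : Full G W S T) (hSW : S ⊆ W) (hTW : T ⊆ W) (hS : S.Nonempty)
    (hT : T.Nonempty) (hz : ∃ v ∈ W, v ≠ z)
    (hdeg : ∀ v ∈ W, v ≠ z → 3 ≤ dg G W S T v) : Adm G W S T 2 := by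
  by_contra hno
  have hno' : ¬ Adm G W T S 2 := fun h => hno h.symm
  have hSI : ∀ s₁ ∈ S, ∀ s₂ ∈ S, ¬ G.Adj s₁ s₂ := fun s₁ h1 s₂ h2 h =>
    hno (adm_two_of_adj hW (hT.imp fun t ht => ⟨ht, hTW ht⟩) h1 h2 (hSW h1) (hSW h2) h)
  have hSC : ∀ a ∈ W, ∀ b₁ ∈ S, ∀ b₂ ∈ S, G.Adj a b₁ → G.Adj a b₂ → b₁ = b₂ := by
    intro a ha b₁ h1 b₂ h2 ha1 ha2
    by_contra hne
    exact hno (adm_two_of_common_nbr hF h1 h2 (hSW h1) (hSW h2) ha hne ha1 ha2)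
  have hTC : ∀ a ∈ W, ∀ b₁ ∈ T, ∀ b₂ ∈ T, G.Adj a b₁ → G.Adj a b₂ → b₁ = b₂ := by
    intro a ha b₁ h1 b₂ h2 ha1 ha2
    by_contra hne
    exact hno' (adm_two_of_common_nbr hF.symm h1 h2 (hTW h1) (hTW h2) ha hne ha1 ha2)
  have hTS : T ⊆ S := by
    intro t ht
    by_contra htS
    exact hno (two_paths_of_not_subset ih hW hF hSW hS hSC hdeg (hTW ht) ht htS)
  have hST : S ⊆ T := by
    intro t ht
    by_contra htS
    exact hno' (two_paths_of_not_subset ih hW hF.symm hTW hT hTC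
      (fun v hv hvz => (hdeg v hv hvz).trans dg_symm.le) (hSW ht) ht htS)
  obtain rfl := hST.antisymm hTS
  exact hno (two_paths_of_eq ih hW hF hSW hS hSI hSC hz hdeg)

/-- Deleting the exempt vertex `z` when it is a leaf: its neighbour `b` becomes exempt. -/
lemma two_paths_of_leaf {W S T : Finset V} {z b : V} (ih : TwoPaths G W.card)
    (hW : Conn G W)
    (h2 : ∀ b ∈ W, ∀ A ⊆ W.erase b, (∃ a ∈ A, a ≠ z) → Cl G (W.erase b) A →
      (∃ s ∈ A, s ∈ S) ∧ (∃ t ∈ A, t ∈ T))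
    (hdeg : ∀ v ∈ W, v ≠ z → 3 ≤ dg G W S T v) (hzW : z ∈ W) (hbW : b ∈ W) (hbz : b ≠ z)
    (hzb : ∀ w ∈ W, G.Adj z w → w = b) (hzS : z ∈ S) (hzT : z ∉ T) : Adm G W S T 2 := by
  have hadj : G.Adj z b := by
    obtain ⟨a, ha, w, hw, -, haw⟩ := hW.exists_adj (A := {z}) (by simpa using hzW) (by simp)
      (fun h => hbz (by rw [← h] at hbW; simpa using hbW))
    rw [Finset.mem_singleton] at ha
    subst ha
    exact hzb w hw haw ▸ haw
  by_cases hA : ∃ v ∈ W, v ≠ z ∧ v ≠ b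
  · have hlt : (W.erase z).card < W.card := Finset.card_erase_lt_of_mem hzW
    obtain ⟨v₀, hv0, hvz0, hvb0⟩ := hA
    have hA' := h2 b hbW ((W.erase b).erase z) (Finset.erase_subset _ _)
      ⟨v₀, by simp [hv0, hvz0, hvb0], hvz0⟩ (by
        intro a ha w hw haw
        simp only [Finset.mem_erase] at ha hw ⊢
        refine ⟨?_, hw⟩
        rintro rfl
        exact ha.2.1 (hzb a ha.2.2 haw.symm))
    have hadm : Adm G (W.erase z) S T 2 := by
      refine ih _ S T b hlt ⟨⟨b, by simp [hbz, hbW]⟩, ?_, ?_⟩ ⟨v₀, by simp [hv0, hvz0], hvb0⟩ ?_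
      · intro X hX hn hcl
        have hXW : insert z X = W := by
          refine hW _ (Finset.insert_subset hzW (hX.trans (Finset.erase_subset _ _))) (by simp) ?_
          have hbX : b ∈ X := by
            by_contra hbX
            have : X = W := by
              refine hW X (hX.trans (Finset.erase_subset _ _)) hn ?_
              intro x hx w hw hxw
              by_cases hwz : w = z
              · subst hwz
                exact absurd (hzb x (Finset.mem_of_mem_erase (hX hx)) hxw.symm ▸ hx) hbX
              · exact hcl x hx w (by simp [hw, hwz]) hxw
            exact hbX (this ▸ hbW)
          intro x hx w hw hxw
          by_cases hwz : w = z
          · simp [hwz]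
          · rcases Finset.mem_insert.1 hx with rfl | hx
            · rw [hzb w hw hxw]; simp [hbX]
            · exact Finset.mem_insert_of_mem (hcl x hx w (by simp [hw, hwz]) hxw)
        have hsub : (W.erase b).erase z ⊆ X := by
          intro v hv
          simp only [Finset.mem_erase] at hv
          have := hv.2.2
          rw [← hXW, Finset.mem_insert] at this
          exact this.resolve_left hv.1
        obtain ⟨⟨s, hs, hsS⟩, t, ht, htT⟩ := hA'
        exact ⟨⟨s, hsub hs, hsS⟩, t, hsub ht, htT⟩
      · intro b' hb' X hX hn hcl
        have hXW : X ⊆ W.erase b' := hX.trans (Finset.erase_subset_erase _ (Finset.erase_subset _ _))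
        have hXz : ∀ x ∈ X, x ≠ z := fun x hx =>
          (Finset.mem_erase.1 (Finset.mem_of_mem_erase (hX hx))).1
        rw [Finset.mem_erase] at hb'
        obtain ⟨x₀, hx0⟩ := hn
        by_cases hbX : b ∈ X
        · obtain ⟨t, ht, htT⟩ := (h2 b' hb'.2 (insert z X)
            (Finset.insert_subset (by simp [hzW, hb'.1.symm]) hXW)
            ⟨x₀, by simp [hx0], hXz x₀ hx0⟩ (by
              intro x hx w hw hxw
              rw [Finset.mem_erase] at hw
              by_cases hwz : w = z
              · simp [hwz]
              · rcases Finset.mem_insert.1 hx with rfl | hx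
                · rw [hzb w hw.2 hxw]; simp [hbX]
                · exact Finset.mem_insert_of_mem (hcl x hx w (by simp [hw, hwz]) hxw))).2
          rcases Finset.mem_insert.1 ht with rfl | ht
          · exact absurd htT hzT
          · exact ⟨t, ht, Or.inr htT⟩
        · obtain ⟨t, ht, htT⟩ := (h2 b' hb'.2 X hXW ⟨x₀, hx0, hXz x₀ hx0⟩ (by
              intro x hx w hw hxw
              rw [Finset.mem_erase] at hw
              by_cases hwz : w = z
              · subst hwz
                exact absurd (hzb x (Finset.mem_of_mem_erase (hXW hx)) hxw.symm ▸ hx) hbX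
              · exact hcl x hx w (by simp [hw, hwz]) hxw)).1
          exact ⟨t, ht, Or.inl htT⟩
      · intro v hv hvb
        rw [Finset.mem_erase] at hv
        refine (hdeg v hv.2 hv.1).trans (dg_le (l := 0) (R := ∅) (fun w hw hvw => ?_) (by simp))
        refine Or.inl (Finset.mem_erase.2 ⟨?_, hw⟩)
        rintro rfl
        exact hvb (hzb v hv.2 hvw.symm)
    exact hadm.mono (Finset.erase_subset _ _) le_rfl le_rfl le_rfl
  · -- `W = {z, b}`, so `b` has degree three only if it belongs to both terminal sets
    push Not at hA
    have h3 := hdeg b hbW hbz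
    have hc : (W.filter (G.Adj b)).card ≤ 1 := by
      rw [Finset.card_le_one]
      have : ∀ w ∈ W.filter (G.Adj b), w = z := by
        intro w hw
        rw [Finset.mem_filter] at hw
        by_contra hwz
        exact hw.2.ne' (hA w hw.1 hwz)
      intro x hx y hy
      rw [this x hx, this y hy]
    have hbS : b ∈ S := by
      by_contra hbS
      simp only [dg, hbS, if_false] at h3
      split_ifs at h3 <;> omega
    have hbT : b ∈ T := by
      by_contra hbT
      simp only [dg, hbT, if_false] at h3
      split_ifs at h3 <;> omega
    exact adm_two_of_adj hW ⟨b, hbT, hbW⟩ hzS hbS hzW hbW hadj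

/-- The case `D = 3` of `rooted`, with one exempt vertex. The exemption is needed since removing a
leaf lowers the degree of its neighbour. -/
theorem two_paths (n : ℕ) : TwoPaths G n := by
  induction n with
  | zero => exact fun W S T z h => absurd h (by omega)
  | succ n ihn =>
    intro W S T z hn hRC hz hdeg
    have ih : TwoPaths G W.card := fun W' S' T' z' h => ihn W' S' T' z' (by omega)
    -- only the parts of the terminal sets inside `W` matter
    wlog hSTW : S ⊆ W ∧ T ⊆ W generalizing S T with H
    · refine (H (S ∩ W) (T ∩ W) (hRC.congr (by simp +contextual) (by simp +contextual))
        (fun v hv hvz => (hdeg v hv hvz).trans (le_of_eq ?_))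
        ⟨Finset.inter_subset_right, Finset.inter_subset_right⟩).mono le_rfl
          Finset.inter_subset_left Finset.inter_subset_left le_rfl
      simp [dg, hv]
    obtain ⟨hSW, hTW⟩ := hSTW
    obtain ⟨⟨s₀, hs0, hsS0⟩, t₀, ht0, htT0⟩ := hRC.c1 W le_rfl hRC.ne (fun _ _ w hw _ => hw)
    by_cases hW : Conn G W
    swap
    · simp only [Conn, not_forall] at hW
      obtain ⟨A, hA, hn, hc, hAW⟩ := hW
      have key : ∀ B ⊆ W, Cl G W B → B ≠ W → (∃ v ∈ B, v ≠ z) → Adm G W S T 2 := by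
        intro B hB hBc hBW hBz
        refine (ih B S T z (Finset.card_lt_card (hB.ssubset_of_ne hBW))
          (hRC.of_closed hB (hBz.imp fun _ h => h.1) hBc) hBz fun v hv hvz =>
            (hdeg v (hB hv) hvz).trans (dg_of_closed hBc hv)).mono hB le_rfl le_rfl le_rfl
      by_cases hAz : ∃ v ∈ A, v ≠ z
      · exact key A hA hc hAW hAz
      · obtain ⟨v, hv, hvz⟩ := hz
        obtain ⟨a, ha⟩ := hn
        refine key (W \ A) Finset.sdiff_subset hc.compl ?_ ⟨v, ?_, hvz⟩
        · intro h
          have := h.symm ▸ hA ha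
          simp [ha] at this
        · simp only [Finset.mem_sdiff, hv, true_and]
          exact fun h => hAz ⟨v, h, hvz⟩
    have key : ∀ S T, RC G W S T → (∀ v ∈ W, v ≠ z → 3 ≤ dg G W S T v) →
        ∀ b ∈ W, ∀ A ⊆ W.erase b, (∃ a ∈ A, a ≠ z) → Cl G (W.erase b) A →
        (∀ t ∈ A, t ∉ T) → Adm G W S T 2 := by
      intro S T hRC hdeg b hb A hA hAz hc hT
      obtain ⟨h1, h2, h3, h4⟩ := RC.cut hW hRC hb hA (hAz.imp fun _ h => h.1) hc hT
      exact h4 2 (by norm_num) (ih A S _ z h2 h1 hAz fun v hv hvz =>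
        (hdeg v (Finset.mem_of_mem_erase (hA hv)) hvz).trans (h3 v hv))
    by_contra hno
    have hdeg' : ∀ v ∈ W, v ≠ z → 3 ≤ dg G W T S v := fun v hv hvz =>
      (hdeg v hv hvz).trans dg_symm.le
    have h2 : ∀ b ∈ W, ∀ A ⊆ W.erase b, (∃ a ∈ A, a ≠ z) → Cl G (W.erase b) A →
      (∃ s ∈ A, s ∈ S) ∧ (∃ t ∈ A, t ∈ T) := by
      intro b hb A hA hAz hc
      constructor
      · by_contra hcon
        push Not at hcon
        exact hno (key T S hRC.symm hdeg' b hb A hA hAz hc hcon).symm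
      · by_contra hcon
        push Not at hcon
        exact hno (key S T hRC hdeg b hb A hA hAz hc hcon)
    by_cases hF : Full G W S T
    · exact hno (two_paths_of_full ih hW hF hSW hTW ⟨s₀, hsS0⟩ ⟨t₀, htT0⟩ hz hdeg)
    · simp only [Full, not_forall] at hF
      obtain ⟨b, hb, A, hA, hn, hc, hST⟩ := hF
      have hAz : ∀ a ∈ A, a = z := by
        by_contra hcon
        push Not at hcon
        exact hST (h2 b hb A hA hcon hc)
      obtain ⟨a, ha⟩ := hn
      obtain rfl := hAz a ha
      have haW := Finset.mem_erase.1 (hA ha)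
      have hab : ∀ w ∈ W, G.Adj a w → w = b := by
        intro w hw haw
        by_contra hwb
        exact haw.ne (hAz w (hc a ha w (by simp [hw, hwb]) haw)).symm
      obtain ⟨s, hs, hsST⟩ := hRC.c2 b hb A hA ⟨a, ha⟩ hc
      rw [hAz s hs] at hsST
      have hnST : ¬ (a ∈ S ∧ a ∈ T) := fun h => hST ⟨⟨a, ha, h.1⟩, a, ha, h.2⟩
      rcases hsST with h | h
      · exact hno (two_paths_of_leaf ih hW h2 hdeg haW.2 hb haW.1.symm hab h
          fun h' => hnST ⟨h, h'⟩)
      · exact hno (two_paths_of_leaf ih hW (fun b hb A hA hAz hc => (h2 b hb A hA hAz hc).symm)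
          hdeg' haW.2 hb haW.1.symm hab h fun h' => hnST ⟨h', h⟩).symm

/-! ### The inductive setting -/

/-- The situation in the induction step: the claim holds for smaller rooted graphs, `W` is
connected and has no cut vertex, both roots have at least two neighbours, and all degrees are at
least `D ≥ 4`. -/
structure Ctx (G : SimpleGraph V) [DecidableRel G.Adj] (W S T : Finset V) (D : ℕ) : Prop where
  ih : ∀ (W' S' T' : Finset V) (D' : ℕ), W'.card < W.card → RC G W' S' T' →
    (∀ v ∈ W', D' ≤ dg G W' S' T' v) → Adm G W' S' T' (max 1 (D' - 1))
  conn : Conn G W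
  conn2 : ∀ b ∈ W, Conn G (W.erase b)
  hS : S ⊆ W
  hT : T ⊆ W
  hS2 : 2 ≤ S.card
  hT2 : 2 ≤ T.card
  hD : 4 ≤ D
  deg : ∀ v ∈ W, D ≤ dg G W S T v

lemma Ctx.symm {W S T : Finset V} {D : ℕ} (c : Ctx G W S T D) : Ctx G W T S D :=
  ⟨c.ih, c.conn, c.conn2, c.hT, c.hS, c.hT2, c.hS2, c.hD,
    fun v hv => (c.deg v hv).trans dg_symm.le⟩

/-- A proper part of `W - u` has an edge to the rest of `W - u`. -/
lemma Ctx.not_cl {W S T A : Finset V} {D : ℕ} (c : Ctx G W S T D) {u w : V} (hu : u ∈ W)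
    (hA : A ⊆ W) (huA : u ∉ A) (hn : A.Nonempty) (hw : w ∈ W) (hwu : w ≠ u) (hwA : w ∉ A) :
    ¬ Cl G (W.erase u) A := by
  intro hc
  have := c.conn2 u hu A (fun x hx => Finset.mem_erase.2 ⟨fun h => huA (h ▸ hx), hA hx⟩) hn hc
  exact hwA (this ▸ Finset.mem_erase.2 ⟨hwu, hw⟩)

/-- Apply the induction hypothesis to a connected part `C` of `W`, or find a part `A` of it that
is attached to the rest of `C` at a single vertex `u` and avoids the new terminals. -/
lemma Ctx.sub_or {W S T C X Y : Finset V} {D l : ℕ} (c : Ctx G W S T D) (hC : C ⊆ W) {w : V}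
    (hw : w ∈ W) (hwC : w ∉ C) (hconn : Conn G C) (hX : ∃ v ∈ C, v ∈ X) (hY : ∃ v ∈ C, v ∈ Y)
    (hdeg : ∀ v ∈ C, dg G W S T v ≤ dg G C X Y v + l) :
    Adm G C X Y (max 1 (D - 1 - l)) ∨ ∃ u ∈ C, ∃ A ⊆ C.erase u, A.Nonempty ∧ Conn G A ∧
      Cl G (C.erase u) A ∧ (∀ v ∈ A, v ∉ X) ∧ (∀ v ∈ A, v ∉ Y) ∧ ∃ v ∈ A, G.Adj u v := by
  by_cases hRC : RC G C X Y
  · left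
    have := c.ih C X Y (D - l) (Finset.card_lt_card ⟨hC, fun h => hwC (h hw)⟩) hRC
      fun v hv => by have := (c.deg v (hC hv)).trans (hdeg v hv); omega
    rwa [show D - l - 1 = D - 1 - l by omega] at this
  · right
    have hne : C.Nonempty := hX.imp fun _ h => h.1
    have : ¬ ∀ b ∈ C, ∀ A ⊆ C.erase b, A.Nonempty → Cl G (C.erase b) A →
        ∃ s ∈ A, s ∈ X ∨ s ∈ Y := by
      intro h
      refine hRC ⟨hne, fun A hA hn hc => ?_, h⟩
      rw [hconn A hA hn hc]
      exact ⟨hX, hY⟩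
    push Not at this
    obtain ⟨b, hb, A, hA, ⟨a, ha⟩, hc, hXY⟩ := this
    have hsub : comp G (C.erase b) a ⊆ A := comp_min hA ha hc
    refine ⟨b, hb, comp G (C.erase b) a, comp_subset, ⟨a, self_mem_comp (hA ha)⟩,
      comp_conn (hA ha), comp_cl, fun v hv => (hXY v (hsub hv)).1,
      fun v hv => (hXY v (hsub hv)).2, ?_⟩
    by_contra hcon
    push Not at hcon
    have hbA : b ∉ comp G (C.erase b) a := fun h => by simpa using comp_subset h
    have := hconn (comp G (C.erase b) a) (comp_subset.trans (Finset.erase_subset _ _))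
      ⟨a, self_mem_comp (hA ha)⟩ (by
        intro x hx w hw hxw
        by_cases hwb : w = b
        · exact absurd (hwb ▸ hxw.symm) (hcon x hx)
        · exact comp_cl x hx w (by simp [hw, hwb]) hxw)
    rw [this] at hbA
    exact hbA hb

/-- If moreover all vertices of `C` with neighbours outside are new terminals, the induction
hypothesis applies. -/
lemma Ctx.sub {W S T C X Y : Finset V} {D l : ℕ} (c : Ctx G W S T D) (hC : C ⊆ W) {w : V}
    (hw : w ∈ W) (hwC : w ∉ C) (hconn : Conn G C) (hX : ∃ v ∈ C, v ∈ X) (hY : ∃ v ∈ C, v ∈ Y)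
    (hdeg : ∀ v ∈ C, dg G W S T v ≤ dg G C X Y v + l)
    (hbd : ∀ v ∈ C, ∀ w ∈ W, w ∉ C → G.Adj v w → v ∈ X ∨ v ∈ Y) :
    Adm G C X Y (max 1 (D - 1 - l)) := by
  refine (c.sub_or hC hw hwC hconn hX hY hdeg).resolve_right ?_
  rintro ⟨u, hu, A, hA, hn, -, hcl, hAX, hAY, -⟩
  have hAC : A ⊆ C := hA.trans (Finset.erase_subset _ _)
  refine c.not_cl (hC hu) (hAC.trans hC) (fun h => by simpa using hA h) hn hw
    (fun h => hwC (h ▸ hu)) (fun h => hwC (hAC h)) ?_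
  intro x hx w hw hxw
  rw [Finset.mem_erase] at hw
  by_cases hwC : w ∈ C
  · exact hcl x hx w (by simp [hw.1, hwC]) hxw
  · exact ((hbd x (hAC hx) w hw.2 hwC hxw).elim (hAX x hx) (hAY x hx)).elim

/-- Paths through `A`, prolonged at both ends. -/
lemma sandwich {W A R₁ R₂ S T Q U : Finset V} {r k r' : ℕ} (h : Adm G A (nb G Q) (nb G U) k)
    (h1 : Exits G R₁ S Q r) (h2 : Exits G R₂ T U r') (hk : 1 ≤ k) (hr : 1 ≤ r) (hr' : 1 ≤ r')
    (h12 : Disjoint R₁ R₂) (h1A : Disjoint R₁ A) (h2A : Disjoint R₂ A) (hR1 : R₁ ⊆ W)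
    (hR2 : R₂ ⊆ W) (hA : A ⊆ W) : Adm G W S T (k + r - 1 + r' - 1) := by
  have := h1.glue (W := R₁ ∪ A) h hr hk h1A Finset.subset_union_left Finset.subset_union_right
  exact h2.glue_back this hr' (by omega) (Finset.disjoint_union_right.2 ⟨h12.symm, h2A⟩) hR2
    (Finset.union_subset hR1 hA)

/-- The number of neighbours in `Q`, compared with membership in the neighbourhood of `Q`. -/
lemma card_nbrs_le {Q : Finset V} (v : V) :
    (Q.filter (G.Adj v)).card ≤ Q.card - 1 + (if v ∈ nb G Q then 1 else 0) := by
  have h1 := Finset.card_filter_le Q (G.Adj v)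
  rcases Finset.eq_empty_or_nonempty (Q.filter (G.Adj v)) with h | ⟨w, hw⟩
  · simp [h]
  · rw [Finset.mem_filter] at hw
    have : v ∈ nb G Q := mem_nb.2 ⟨w, hw.1, hw.2.symm⟩
    simp only [this, if_true]
    omega

/-- A connected part `A` whose outside neighbours lie in `Q` and `u` provides the paths, when
`Q` can be reached from `S` by sufficiently many paths and `u` by a path from `T`. -/
lemma Ctx.inst {W S T A Q R₁ R₂ : Finset V} {D r : ℕ} (c : Ctx G W S T D) {u w : V}
    (hA : A ⊆ W) (hconn : Conn G A) (hu : u ∈ W) (huA : u ∉ A) (hadj : ∃ v ∈ A, G.Adj u v)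
    (hbd : ∀ v ∈ A, ∀ w ∈ W, G.Adj v w → w ∈ A ∨ w ∈ Q ∨ w = u)
    (hT : ∀ v ∈ A, v ∉ T) (hw : w ∈ W) (hwu : w ≠ u) (hwA : w ∉ A)
    (hloss : ∀ v ∈ A, (Q.filter (G.Adj v)).card + (if v ∈ S then 1 else 0)
      ≤ (r - 1) + (if v ∈ nb G Q then 1 else 0)) (hr : 1 ≤ r)
    (h1 : Exits G R₁ S Q r) (h2 : Exits G R₂ T {u} 1)
    (h12 : Disjoint R₁ R₂) (h1A : Disjoint R₁ A) (h2A : Disjoint R₂ A) (hR1 : R₁ ⊆ W)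
    (hR2 : R₂ ⊆ W) : Adm G W S T (D - 1) := by
  obtain ⟨v₀, hv0, hv0u⟩ := hadj
  have hQ : ∃ v ∈ A, v ∈ nb G Q := by
    by_contra hcon
    push Not at hcon
    refine c.not_cl hu hA huA ⟨v₀, hv0⟩ hw hwu hwA fun x hx y hy hxy => ?_
    rw [Finset.mem_erase] at hy
    rcases hbd x hx y hy.2 hxy with h | h | h
    · exact h
    · exact absurd (mem_nb.2 ⟨y, h, hxy.symm⟩) (hcon x hx)
    · exact absurd h hy.1
  have hadm : Adm G A (nb G Q) (nb G {u}) (max 1 (D - 1 - (r - 1))) := by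
    refine c.sub hA hu huA hconn hQ ⟨v₀, hv0, mem_nb_single.2 hv0u⟩ ?_ ?_
    · intro v hv
      have hl := hloss v hv
      by_cases hvu : G.Adj u v
      · refine dg_le (R := insert u (Q.filter (G.Adj v))) (fun w hw hvw => ?_) ?_
        · rcases hbd v hv w hw hvw with h | h | h
          · exact Or.inl h
          · simp [h, hvw]
          · simp [h]
        · have := Finset.card_insert_le u (Q.filter (G.Adj v))
          simp only [hT v hv, mem_nb_single, hvu, if_true, if_false]
          omega
      · refine dg_le (R := Q.filter (G.Adj v)) (fun w hw hvw => ?_) ?_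
        · rcases hbd v hv w hw hvw with h | h | h
          · exact Or.inl h
          · simp [h, hvw]
          · exact absurd (h ▸ hvw.symm) hvu
        · simp only [hT v hv, mem_nb_single, hvu, if_false]
          omega
    · intro v hv w hw hwA hvw
      rcases hbd v hv w hw hvw with h | h | h
      · exact absurd h hwA
      · exact Or.inl (mem_nb.2 ⟨w, h, hvw.symm⟩)
      · exact Or.inr (mem_nb_single.2 (h ▸ hvw.symm))
  refine (sandwich hadm h1 h2 (le_max_left _ _) hr le_rfl h12 h1A h2A hR1 hR2 hA).mono le_rfl le_rfl
    le_rfl ?_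
  omega

lemma Ctx.exists_ne {W S T : Finset V} {D : ℕ} (c : Ctx G W S T D) (u : V) : ∃ s ∈ S, s ≠ u := by
  obtain ⟨s, hs, h⟩ := Finset.exists_mem_ne (s := S) c.hS2 u
  exact ⟨s, hs, h⟩

/-- The special case of `Ctx.inst` where `A` avoids both terminal sets and the rank is the number
of exits. -/
lemma Ctx.split {W S T A Q R₁ R₂ : Finset V} {D : ℕ} (c : Ctx G W S T D) {u : V}
    (hA : A ⊆ W) (hconn : Conn G A) (hu : u ∈ W) (huA : u ∉ A) (hadj : ∃ v ∈ A, G.Adj u v)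
    (hbd : ∀ v ∈ A, ∀ w ∈ W, G.Adj v w → w ∈ A ∨ w ∈ Q ∨ w = u)
    (hS : ∀ v ∈ A, v ∉ S) (hT : ∀ v ∈ A, v ∉ T) (hQ : Q.Nonempty)
    (h1 : Exits G R₁ S Q Q.card) (h2 : Exits G R₂ T {u} 1)
    (h12 : Disjoint R₁ R₂) (h1A : Disjoint R₁ A) (h2A : Disjoint R₂ A) (hR1 : R₁ ⊆ W)
    (hR2 : R₂ ⊆ W) : Adm G W S T (D - 1) := by
  obtain ⟨s, hs, hsu⟩ := c.exists_ne u
  refine c.inst hA hconn hu huA hadj hbd hT (c.hS hs) hsu (fun h => hS s h hs) ?_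
    (Finset.card_pos.2 hQ) h1 h2 h12 h1A h2A hR1 hR2
  intro v hv
  simpa [hS v hv] using card_nbrs_le v

/-! ### Two sets of exits -/

/-- Paths through the first set `E₁` of exits; otherwise the component of `t`, or a part of it
attached to the rest at a single vertex, is not seen by `E₁`. -/
lemma Ctx.tt_or {W S T E₁ E₂ : Finset V} {D r : ℕ} (c : Ctx G W S T D) {t : V}
    (hE1 : E₁ ⊆ W) (hE2 : E₂ ⊆ W) (hn : E₁.Nonempty) (hr : 1 ≤ r)
    (h1 : Exits G (E₁ ∪ E₂) S E₁ r) (htW : t ∈ W \ (E₁ ∪ E₂)) (htT : t ∈ T)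
    (hl : ∀ v ∈ W \ (E₁ ∪ E₂), ((E₁ ∪ E₂).filter (G.Adj v)).card + (if v ∈ S then 1 else 0)
      ≤ (r - 1) + (if v ∈ nb G E₁ then 1 else 0)) :
    Adm G W S T (D - 1) ∨ (∀ v ∈ comp G (W \ (E₁ ∪ E₂)) t, v ∉ nb G E₁) ∨
      ∃ u ∈ comp G (W \ (E₁ ∪ E₂)) t, ∃ A ⊆ (comp G (W \ (E₁ ∪ E₂)) t).erase u,
        A.Nonempty ∧ Conn G A ∧ Cl G ((comp G (W \ (E₁ ∪ E₂)) t).erase u) A ∧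
        (∀ v ∈ A, v ∉ nb G E₁) ∧ (∀ v ∈ A, v ∉ T) ∧ ∃ v ∈ A, G.Adj u v := by
  obtain ⟨e, he⟩ := hn
  by_cases hX : ∃ v ∈ comp G (W \ (E₁ ∪ E₂)) t, v ∈ nb G E₁
  · have hCW : comp G (W \ (E₁ ∪ E₂)) t ⊆ W := comp_subset.trans Finset.sdiff_subset
    have hCH : ∀ v ∈ comp G (W \ (E₁ ∪ E₂)) t, v ∉ E₁ ∪ E₂ := fun v hv =>
      (Finset.mem_sdiff.1 (comp_subset hv)).2
    rcases c.sub_or (l := r - 1) hCW (hE1 he)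
      (fun h => hCH e h (Finset.mem_union_left _ he)) (comp_conn htW) hX
      ⟨t, self_mem_comp htW, htT⟩ (fun v hv => dg_le (R := (E₁ ∪ E₂).filter (G.Adj v))
        (fun w hw hvw => (comp_sdiff_nbr hv hw hvw).imp id fun h => Finset.mem_filter.2 ⟨h, hvw⟩)
        (by have := hl v (comp_subset hv); omega)) with h | h
    · left
      refine (h1.glue (W := W) h hr (le_max_left _ _) (Finset.disjoint_left.2 fun v hv hvC =>
        hCH v hvC hv) (Finset.union_subset hE1 hE2) hCW).mono le_rfl le_rfl le_rfl ?_
      omega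
    · exact Or.inr (Or.inr h)
  · push Not at hX
    exact Or.inr (Or.inl hX)

/-- The component of `t` is not seen by `E₁`. -/
lemma Ctx.tt_f1 {W S T E₁ E₂ : Finset V} {D r : ℕ} (c : Ctx G W S T D) {t : V}
    (hE1 : E₁ ⊆ W) (hE2 : E₂ ⊆ W) (hn : E₁.Nonempty) (hr : 1 ≤ r)
    (h2 : Exits G (E₁ ∪ E₂) S E₂ r) (htW : t ∈ W \ (E₁ ∪ E₂)) (htT : t ∈ T)
    (hl : ∀ v ∈ W \ (E₁ ∪ E₂), v ∉ nb G E₁ →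
      (E₂.filter (G.Adj v)).card + (if v ∈ S then 1 else 0)
      ≤ (r - 1) + (if v ∈ nb G E₂ then 1 else 0))
    (hf : ∀ v ∈ comp G (W \ (E₁ ∪ E₂)) t, v ∉ nb G E₁) : Adm G W S T (D - 1) := by
  obtain ⟨e, he⟩ := hn
  have hCW : comp G (W \ (E₁ ∪ E₂)) t ⊆ W := comp_subset.trans Finset.sdiff_subset
  have hCH : ∀ v ∈ comp G (W \ (E₁ ∪ E₂)) t, v ∉ E₁ ∪ E₂ := fun v hv =>
    (Finset.mem_sdiff.1 (comp_subset hv)).2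
  have hbd : ∀ v ∈ comp G (W \ (E₁ ∪ E₂)) t, ∀ w ∈ W, G.Adj v w →
      w ∈ comp G (W \ (E₁ ∪ E₂)) t ∨ w ∈ E₂ := by
    intro v hv w hw hvw
    refine (comp_sdiff_nbr hv hw hvw).imp id fun h => ?_
    exact (Finset.mem_union.1 h).resolve_left fun h =>
      hf v hv (mem_nb.2 ⟨w, h, hvw.symm⟩)
  obtain ⟨x, hx, f, hfW, hfE, hfx⟩ := c.conn.comp_nb htW (hE1 he) (Finset.mem_union_left _ he)
  have hxf := (hbd x hx f hfW hfx.symm).resolve_left fun h => hCH f h hfE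
  have := c.sub (l := r - 1) (X := nb G E₂) hCW (hE1 he)
      (fun h => hCH e h (Finset.mem_union_left _ he)) (comp_conn htW)
      ⟨x, hx, mem_nb.2 ⟨f, hxf, hfx⟩⟩
      ⟨t, self_mem_comp htW, htT⟩ (fun v hv => dg_le (R := E₂.filter (G.Adj v))
        (fun w hw hvw => (hbd v hv w hw hvw).imp id fun h => Finset.mem_filter.2 ⟨h, hvw⟩)
        (by have := hl v (comp_subset hv) (hf v hv); omega))
      (fun v hv w hw hwC hvw => Or.inl (mem_nb.2 ⟨w, (hbd v hv w hw hvw).resolve_left hwC,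
        hvw.symm⟩))
  refine (h2.glue (W := W) this hr (le_max_left _ _) (Finset.disjoint_left.2 fun v hv hvC =>
        hCH v hvC hv) (Finset.union_subset hE1 hE2) hCW).mono le_rfl le_rfl le_rfl ?_
  omega

/-- A part `A` of the component of `t`, attached at a vertex `u`, is not seen by `E₁`. -/
lemma Ctx.tt_f2 {W S T E₁ E₂ A : Finset V} {D r : ℕ} (c : Ctx G W S T D) {t u : V}
    (hE1 : E₁ ⊆ W) (hE2 : E₂ ⊆ W) (hn : E₁.Nonempty) (hr : 1 ≤ r)
    (h2 : Exits G (E₁ ∪ E₂) S E₂ r) (htW : t ∈ W \ (E₁ ∪ E₂)) (htT : t ∈ T)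
    (hu : u ∈ comp G (W \ (E₁ ∪ E₂)) t) (hA : A ⊆ (comp G (W \ (E₁ ∪ E₂)) t).erase u)
    (hconn : Conn G A) (hcl : Cl G ((comp G (W \ (E₁ ∪ E₂)) t).erase u) A)
    (hf : ∀ v ∈ A, v ∉ nb G E₁) (hT : ∀ v ∈ A, v ∉ T) (hadj : ∃ v ∈ A, G.Adj u v)
    (hl : ∀ v ∈ A, (E₂.filter (G.Adj v)).card + (if v ∈ S then 1 else 0)
      ≤ (r - 1) + (if v ∈ nb G E₂ then 1 else 0)) : Adm G W S T (D - 1) := by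
  obtain ⟨e, he⟩ := hn
  have hCW : comp G (W \ (E₁ ∪ E₂)) t ⊆ W := comp_subset.trans Finset.sdiff_subset
  have hCH : ∀ v ∈ comp G (W \ (E₁ ∪ E₂)) t, v ∉ E₁ ∪ E₂ := fun v hv =>
    (Finset.mem_sdiff.1 (comp_subset hv)).2
  have hAC : A ⊆ comp G (W \ (E₁ ∪ E₂)) t := hA.trans (Finset.erase_subset _ _)
  have huA : u ∉ A := fun h => by simpa using hA h
  have heH : e ∈ E₁ ∪ E₂ := Finset.mem_union_left _ he
  refine c.inst (R₂ := comp G (W \ (E₁ ∪ E₂)) t \ A) (hAC.trans hCW) hconn (hCW hu) huA hadj ?_ hT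
    (hE1 he) (fun h => hCH e (h ▸ hu) heH) (fun h => hCH e (hAC h) heH) hl hr h2
    (((comp_conn htW).sdiff hu hA hcl).exits (by simp [hu, huA])
      (Finset.mem_sdiff.2 ⟨self_mem_comp htW, fun h => hT t h htT⟩) htT) ?_ ?_
      Finset.sdiff_disjoint (Finset.union_subset hE1 hE2) (Finset.sdiff_subset.trans hCW)
  · intro v hv w hw hvw
    rcases comp_sdiff_nbr (hAC hv) hw hvw with h | h
    · by_cases hwu : w = u
      · exact Or.inr (Or.inr hwu)
      · exact Or.inl (hcl v hv w (Finset.mem_erase.2 ⟨hwu, h⟩) hvw)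
    · exact Or.inr (Or.inl ((Finset.mem_union.1 h).resolve_left fun h =>
        hf v hv (mem_nb.2 ⟨w, h, hvw.symm⟩)))
  · exact Finset.disjoint_left.2 fun v hv hv' => hCH v (Finset.mem_sdiff.1 hv').1 hv
  · exact Finset.disjoint_left.2 fun v hv hv' => hCH v (hAC hv') hv

/-- Paths through the exits `E₁`, or through the exits `E₂` in a part of the graph that `E₁` does not
see. The bounds `hl1` and `hl2` say that an outside vertex loses no more degree than the ranks
of the exits make up for. -/
lemma Ctx.tt {W S T E₁ E₂ : Finset V} {D r₁ r₂ : ℕ} (c : Ctx G W S T D) {t : V}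
    (hE1 : E₁ ⊆ W) (hE2 : E₂ ⊆ W) (hn : E₁.Nonempty) (hr1 : 1 ≤ r₁) (hr2 : 1 ≤ r₂)
    (h1 : Exits G (E₁ ∪ E₂) S E₁ r₁) (h2 : Exits G (E₁ ∪ E₂) S E₂ r₂)
    (htW : t ∈ W \ (E₁ ∪ E₂)) (htT : t ∈ T)
    (hl1 : ∀ v ∈ W \ (E₁ ∪ E₂), ((E₁ ∪ E₂).filter (G.Adj v)).card + (if v ∈ S then 1 else 0)
      ≤ (r₁ - 1) + (if v ∈ nb G E₁ then 1 else 0))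
    (hl2 : ∀ v ∈ W \ (E₁ ∪ E₂), v ∉ nb G E₁ →
      (E₂.filter (G.Adj v)).card + (if v ∈ S then 1 else 0)
      ≤ (r₂ - 1) + (if v ∈ nb G E₂ then 1 else 0)) : Adm G W S T (D - 1) := by
  rcases c.tt_or hE1 hE2 hn hr1 h1 htW htT hl1 with h | h | ⟨u, hu, A, hA, -, hc, hcl, hf, hT, ha⟩
  · exact h
  · exact c.tt_f1 hE1 hE2 hn hr2 h2 htW htT hl2 h
  · exact c.tt_f2 hE1 hE2 hn hr2 h2 htW htT hu hA hc hcl hf hT ha fun v hv =>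
      hl2 v (comp_subset (Finset.mem_of_mem_erase (hA hv))) (hf v hv)

/-! ### Roots in a triangle -/

lemma clique_exits {K S : Finset V} (hK : ∀ a ∈ K, ∀ b ∈ K, a ≠ b → G.Adj a b) (hKS : K ⊆ S) :
    Exits G K S K K.card := by
  refine ⟨0, 1, Or.inl rfl, fun e he i hi => ?_⟩
  obtain ⟨s, hs, hp⟩ := clique_path i K hK hi e he
  exact ⟨s, hKS hs, by simpa using hp⟩

/-- A maximal clique containing at least two vertices: each outside vertex misses one of its members. -/
lemma exists_max_clique {U : Finset V} {a b : V} (ha : a ∈ U) (hb : b ∈ U) (hab : G.Adj a b) :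
    ∃ K ⊆ U, 2 ≤ K.card ∧ (∀ x ∈ K, ∀ y ∈ K, x ≠ y → G.Adj x y) ∧
      ∀ v ∈ U, v ∉ K → (K.filter (G.Adj v)).card + 1 ≤ K.card := by
  classical
  obtain ⟨K, hK, hmax⟩ := Finset.exists_max_image
    (U.powerset.filter fun K => ∀ x ∈ K, ∀ y ∈ K, x ≠ y → G.Adj x y) Finset.card ⟨{a, b}, by
      simp only [Finset.mem_filter, Finset.mem_powerset]
      refine ⟨by simp [Finset.insert_subset_iff, ha, hb], ?_⟩
      intro x hx y hy hxy
      simp only [Finset.mem_insert, Finset.mem_singleton] at hx hy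
      rcases hx with rfl | rfl <;> rcases hy with rfl | rfl <;> simp_all [G.adj_comm]⟩
  simp only [Finset.mem_filter, Finset.mem_powerset] at hK hmax
  refine ⟨K, hK.1, ?_, hK.2, ?_⟩
  · have := hmax {a, b} ⟨by simp [Finset.insert_subset_iff, ha, hb], by
      intro x hx y hy hxy
      simp only [Finset.mem_insert, Finset.mem_singleton] at hx hy
      rcases hx with rfl | rfl <;> rcases hy with rfl | rfl <;> simp_all [G.adj_comm]⟩
    rwa [Finset.card_pair hab.ne] at this
  · intro v hv hvK
    by_contra hcon
    have hle := Finset.card_filter_le K (G.Adj v)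
    have hall : ∀ k ∈ K, G.Adj v k := by
      rw [← Finset.filter_eq_self]
      exact Finset.eq_of_subset_of_card_le (Finset.filter_subset _ _) (by omega)
    have := hmax (insert v K) ⟨Finset.insert_subset hv hK.1, by
      intro x hx y hy hxy
      rcases Finset.mem_insert.1 hx with hx' | hx' <;>
        rcases Finset.mem_insert.1 hy with hy' | hy'
      · exact absurd (hx'.trans hy'.symm) hxy
      · exact hx' ▸ hall y hy'
      · exact hy' ▸ (hall x hx').symm
      · exact hK.2 x hx' y hy' hxy⟩
    rw [Finset.card_insert_of_notMem hvK] at this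
    omega

/-- If `S` spans an edge, a maximal clique in `S` provides the paths unless it contains `T`. -/
lemma Ctx.clique_or {W S T : Finset V} {D : ℕ} (c : Ctx G W S T D) {s₁ s₂ : V} (h1 : s₁ ∈ S)
    (h2 : s₂ ∈ S) (h : G.Adj s₁ s₂) : Adm G W S T (D - 1) ∨
      (T ⊆ S ∧ ∀ x ∈ T, ∀ y ∈ T, x ≠ y → G.Adj x y) := by
  obtain ⟨K, hKS, hK2, hK, hmax⟩ := exists_max_clique h1 h2 h
  by_cases hT : T ⊆ K
  · exact Or.inr ⟨hT.trans hKS, fun x hx y hy => hK x (hT hx) y (hT hy)⟩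
  · left
    obtain ⟨t, ht, htK⟩ := Finset.not_subset.1 hT
    refine c.tt (t := t) (E₁ := K) (E₂ := ∅) (r₁ := K.card) (r₂ := 2) (hKS.trans c.hS) (by simp)
      (Finset.card_pos.1 (by omega)) (by omega) (by norm_num)
      (by simpa using clique_exits hK hKS) ⟨0, 1, Or.inl rfl, by simp⟩
      (by simp [c.hT ht, htK]) ht ?_ ?_
    · intro v hv
      simp only [Finset.union_empty, Finset.mem_sdiff] at hv ⊢
      have h1 := card_nbrs_le (G := G) (Q := K) v
      by_cases hvS : v ∈ S
      · have h2 := hmax v hvS hv.2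
        rcases Finset.eq_empty_or_nonempty (K.filter (G.Adj v)) with h0 | ⟨w, hw⟩
        · simp only [h0, Finset.card_empty, hvS, if_true]; omega
        · rw [Finset.mem_filter] at hw
          have : v ∈ nb G K := mem_nb.2 ⟨w, hw.1, hw.2.symm⟩
          simp only [this, hvS, if_true]; omega
      · simp only [hvS, if_false]; omega
    · intro v _ _
      simp only [Finset.filter_empty, Finset.card_empty]
      split_ifs <;> omega

/-- If `S` spans an edge, only the case that `S = T` is a clique is left after `Ctx.clique_or`. Then
either `W = S`, or a component outside `S` is entered and left through `S`. -/
lemma Ctx.clique {W S T : Finset V} {D : ℕ} (c : Ctx G W S T D) {s₁ s₂ : V} (h1 : s₁ ∈ S)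
    (h2 : s₂ ∈ S) (h : G.Adj s₁ s₂) : Adm G W S T (D - 1) := by
  rcases c.clique_or h1 h2 h with h | ⟨hTS, hTK⟩
  · exact h
  obtain ⟨t₁, ht1, t₂, ht2, hne⟩ := Finset.one_lt_card.1 c.hT2
  rcases c.symm.clique_or ht1 ht2 (hTK t₁ ht1 t₂ ht2 hne) with h | ⟨hST, hSK⟩
  · exact h.symm
  obtain rfl := hST.antisymm hTS
  by_cases hWS : W ⊆ S
  · have hD := c.deg s₁ (c.hS h1)
    have hlt : (W.filter (G.Adj s₁)).card ≤ (S.erase s₁).card := by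
      refine Finset.card_le_card fun w hw => ?_
      rw [Finset.mem_filter] at hw
      exact Finset.mem_erase.2 ⟨hw.2.ne', hWS hw.1⟩
    rw [Finset.card_erase_of_mem h1] at hlt
    have := c.hS2
    simp only [dg, h1, if_true] at hD
    exact ((clique_exits hTK le_rfl).adm h1 h1).mono c.hS le_rfl le_rfl (by omega)
  · obtain ⟨t, htW, htS⟩ := Finset.not_subset.1 hWS
    have ht : t ∈ W \ S := by simp [htW, htS]
    obtain ⟨x, hx, f, hfW, hfS, hfx⟩ := c.conn.comp_nb ht (c.hS h1) h1
    have hCS : ∀ v ∈ comp G (W \ S) t, v ∉ S := fun v hv =>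
      (Finset.mem_sdiff.1 (comp_subset hv)).2
    refine c.split (R₁ := S.erase f) (R₂ := {f}) (Q := S.erase f)
      (comp_subset.trans Finset.sdiff_subset)
      (comp_conn ht) hfW (fun h => hCS f h hfS) ⟨x, hx, hfx⟩ ?_ hCS hCS ?_
      (clique_exits (fun x hx y hy => hTK x (Finset.mem_of_mem_erase hx) y
        (Finset.mem_of_mem_erase hy)) (Finset.erase_subset _ _))
      (Exits.trivial (by simpa using hfS) le_rfl) (by simp) ?_ ?_
      ((Finset.erase_subset _ _).trans c.hS) (by simpa using hfW)
    · intro v hv w hw hvw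
      rcases comp_sdiff_nbr hv hw hvw with h | h
      · exact Or.inl h
      · by_cases hwf : w = f
        · exact Or.inr (Or.inr hwf)
        · exact Or.inr (Or.inl (by simp [h, hwf]))
    · obtain ⟨s, hs, hsf⟩ := c.exists_ne f
      exact ⟨s, by simp [hs, hsf]⟩
    · exact Finset.disjoint_left.2 fun v hv hv' => hCS v hv' (Finset.mem_of_mem_erase hv)
    · exact Finset.disjoint_left.2 fun v hv hv' => hCS v hv' (by
        rw [Finset.mem_singleton] at hv; exact hv ▸ hfS)

/-! ### Two neighbours of a root with adjacent common neighbours -/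

/-- Let `b₁, b₂ ∈ S` be complete to a clique `M`. The members of `M` can be reached by paths of
lengths `1, …, #M + 1`, the vertices `b₁` and `b₂` by paths of lengths `2, …, #M + 1`. -/
lemma diamond_exits {M S : Finset V} {b₁ b₂ : V} (hM : ∀ x ∈ M, ∀ y ∈ M, x ≠ y → G.Adj x y)
    (hM2 : 2 ≤ M.card) (h1 : b₁ ∈ S) (h2 : b₂ ∈ S) (hne : b₁ ≠ b₂)
    (hb1 : ∀ x ∈ M, G.Adj b₁ x) (hb2 : ∀ x ∈ M, G.Adj b₂ x) :
    Exits G (M ∪ {b₁, b₂}) S M (M.card + 1) ∧ Exits G (M ∪ {b₁, b₂}) S {b₁, b₂} M.card := by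
  have h1M : b₁ ∉ M := fun h => (hb1 _ h).ne rfl
  have h2M : b₂ ∉ M := fun h => (hb2 _ h).ne rfl
  constructor
  · refine ⟨1, 1, Or.inl rfl, fun e he i hi => ⟨b₁, h1, ?_⟩⟩
    by_cases hiM : i < M.card
    · obtain ⟨s, hs, hp⟩ := clique_path i M hM hiM e he
      have := hp.cons (W := M ∪ {b₁, b₂}) h1M (hb1 s hs) Finset.subset_union_left (by simp)
      rwa [show 1 + i * 1 = i + 1 by ring]
    · obtain ⟨m, hm, hme⟩ := Finset.exists_mem_ne (s := M) hM2 e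
      have hc := Finset.card_erase_of_mem hm
      obtain ⟨s, hs, hp⟩ := clique_path (M.card - 2) (M.erase m) (fun x hx y hy =>
        hM x (Finset.mem_of_mem_erase hx) y (Finset.mem_of_mem_erase hy)) (by omega) e
        (by simp [he, hme.symm])
      have p1 := hp.cons (W := insert b₂ (M.erase m)) (w := b₂) (by simp [h2M])
        (hb2 s (Finset.mem_of_mem_erase hs)) (Finset.subset_insert _ _) (by simp)
      have p2 := p1.cons (W := insert b₂ M) (w := m) (by
        simp only [Finset.mem_insert, Finset.mem_erase, ne_eq, not_true, false_and, or_false]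
        exact fun h => h2M (h ▸ hm)) (hb2 m hm).symm
        (Finset.insert_subset_insert _ (Finset.erase_subset _ _)) (by simp [hm])
      have p3 := p2.cons (W := M ∪ {b₁, b₂}) (w := b₁) (by simp [hne, h1M]) (hb1 m hm)
        (by intro x; simp only [Finset.mem_insert, Finset.mem_union, Finset.mem_singleton]; tauto)
        (by simp)
      rwa [show M.card - 2 + 1 + 1 + 1 = 1 + i * 1 by omega] at p3
  · have key : ∀ b b', b ∈ S → b ≠ b' → b ∉ M → b' ∉ M → (∀ x ∈ M, G.Adj b x) →
        (∀ x ∈ M, G.Adj b' x) → ∀ i < M.card, PathIn G (M ∪ {b, b'}) b b' (i + 2) := by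
      intro b b' _ hne hbM hbM' hb hb' i hi
      obtain ⟨m, hm⟩ : M.Nonempty := Finset.card_pos.1 (by omega)
      obtain ⟨s, hs, hp⟩ := clique_path i M hM hi m hm
      have p1 := hp.cons (W := insert b M) hbM (hb s hs) (Finset.subset_insert _ _) (by simp)
      exact p1.snoc (by simp [hne.symm, hbM']) (hb' m hm).symm (by
        intro x; simp only [Finset.mem_insert, Finset.mem_union, Finset.mem_singleton]; tauto)
        (by simp)
    refine ⟨2, 1, Or.inl rfl, fun e he i hi => ?_⟩
    rw [show 2 + i * 1 = i + 2 by ring]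
    simp only [Finset.mem_insert, Finset.mem_singleton] at he
    rcases he with rfl | rfl
    · refine ⟨b₂, h2, ?_⟩
      rw [Finset.pair_comm]
      exact key b₂ e h2 hne.symm h2M h1M hb2 hb1 i hi
    · exact ⟨b₁, h1, key b₁ e h1 hne h1M h2M hb1 hb2 i hi⟩

/-- A maximal clique `M` in the common neighbourhood of `b₁` and `b₂` provides the paths unless
`T = {b₁, b₂}`. -/
lemma Ctx.diamond_or {W S T : Finset V} {D : ℕ} (c : Ctx G W S T D)
    (hSI : ∀ x ∈ S, ∀ y ∈ S, ¬ G.Adj x y) (hTI : ∀ x ∈ T, ∀ y ∈ T, ¬ G.Adj x y)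
    {b₁ b₂ a₁ a₂ : V} (h1 : b₁ ∈ S) (h2 : b₂ ∈ S) (hne : b₁ ≠ b₂) (ha1 : a₁ ∈ W) (ha2 : a₂ ∈ W)
    (h11 : G.Adj b₁ a₁) (h12 : G.Adj b₁ a₂) (h21 : G.Adj b₂ a₁) (h22 : G.Adj b₂ a₂)
    (h : G.Adj a₁ a₂) : Adm G W S T (D - 1) ∨ T = {b₁, b₂} := by
  obtain ⟨M, hMN, hM2, hM, hmax⟩ := exists_max_clique
    (U := W.filter fun v => G.Adj b₁ v ∧ G.Adj b₂ v) (a := a₁) (b := a₂)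
    (by simp [ha1, h11, h21]) (by simp [ha2, h12, h22]) h
  have hMW : M ⊆ W := hMN.trans (Finset.filter_subset _ _)
  have hb1 : ∀ x ∈ M, G.Adj b₁ x := fun x hx => (Finset.mem_filter.1 (hMN hx)).2.1
  have hb2 : ∀ x ∈ M, G.Adj b₂ x := fun x hx => (Finset.mem_filter.1 (hMN hx)).2.2
  have hbS : {b₁, b₂} ⊆ S := by simp [Finset.insert_subset_iff, h1, h2]
  have hMb : Disjoint M {b₁, b₂} := by
    rw [Finset.disjoint_right]
    intro v hv hvM
    simp only [Finset.mem_insert, Finset.mem_singleton] at hv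
    rcases hv with rfl | rfl
    · exact (hb1 _ hvM).ne rfl
    · exact (hb2 _ hvM).ne rfl
  obtain ⟨hE1, hE2⟩ := diamond_exits hM hM2 h1 h2 hne hb1 hb2
  by_cases hT : T ⊆ M ∪ {b₁, b₂}
  · right
    refine Finset.eq_of_subset_of_card_le (fun t ht => ?_) (by rw [Finset.card_pair hne]; exact c.hT2)
    refine (Finset.mem_union.1 (hT ht)).resolve_left fun htM => ?_
    obtain ⟨t', ht', htt⟩ := c.symm.exists_ne t
    refine hTI t ht t' ht' ?_
    have := hT ht'
    simp only [Finset.mem_union, Finset.mem_insert, Finset.mem_singleton] at this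
    rcases this with h | rfl | rfl
    · exact hM t htM t' h htt.symm
    · exact (hb1 t htM).symm
    · exact (hb2 t htM).symm
  · left
    obtain ⟨t, ht, htM⟩ := Finset.not_subset.1 hT
    refine c.tt hMW (hbS.trans c.hS) (Finset.card_pos.1 (by omega)) (by omega) (by omega) hE1 hE2
      (Finset.mem_sdiff.2 ⟨c.hT ht, htM⟩) ht ?_ ?_
    · intro v hv
      rw [Finset.mem_sdiff, Finset.mem_union, not_or] at hv
      rw [Finset.filter_union, Finset.card_union_of_disjoint (Finset.disjoint_filter_filter hMb)]
      have k1 := card_nbrs_le (G := G) (Q := M) v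
      by_cases hvS : v ∈ S
      · have : ({b₁, b₂} : Finset V).filter (G.Adj v) = ∅ :=
          Finset.filter_eq_empty_iff.2 fun w hw => hSI v hvS w (hbS hw)
        simp only [this, Finset.card_empty, hvS, if_true]
        omega
      · have k2 := Finset.card_filter_le ({b₁, b₂} : Finset V) (G.Adj v)
        rw [Finset.card_pair hne] at k2
        simp only [hvS, if_false]
        by_cases hvb : G.Adj b₁ v ∧ G.Adj b₂ v
        · have k3 := hmax v (Finset.mem_filter.2 ⟨hv.1, hvb⟩) hv.2.1
          rcases Finset.eq_empty_or_nonempty (M.filter (G.Adj v)) with h0 | ⟨w, hw⟩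
          · simp only [h0, Finset.card_empty]; omega
          · rw [Finset.mem_filter] at hw
            have : v ∈ nb G M := mem_nb.2 ⟨w, hw.1, hw.2.symm⟩
            simp only [this, if_true]; omega
        · have : (({b₁, b₂} : Finset V).filter (G.Adj v)).card ≠ 2 := by
            intro h2
            have := Finset.eq_of_subset_of_card_le (Finset.filter_subset (G.Adj v) {b₁, b₂})
              (by rw [Finset.card_pair hne, h2])
            rw [Finset.filter_eq_self] at this
            exact hvb ⟨(this b₁ (by simp)).symm, (this b₂ (by simp)).symm⟩
          omega
    · intro v hv _
      have k1 := card_nbrs_le (G := G) (Q := {b₁, b₂}) v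
      rw [Finset.card_pair hne] at k1
      by_cases hvS : v ∈ S
      · have : ({b₁, b₂} : Finset V).filter (G.Adj v) = ∅ :=
          Finset.filter_eq_empty_iff.2 fun w hw => hSI v hvS w (hbS hw)
        simp only [this, Finset.card_empty, hvS, if_true]
        omega
      · simp only [hvS, if_false]
        omega

/-- Only the case `S = T = {b₁, b₂}` is left after `Ctx.diamond_or`; then the component of `a₁`
outside `S` is rooted at `b₁` and `b₂`. -/
lemma Ctx.diamond {W S T : Finset V} {D : ℕ} (c : Ctx G W S T D)
    (hSI : ∀ x ∈ S, ∀ y ∈ S, ¬ G.Adj x y) (hTI : ∀ x ∈ T, ∀ y ∈ T, ¬ G.Adj x y)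
    {b₁ b₂ a₁ a₂ : V} (h1 : b₁ ∈ S) (h2 : b₂ ∈ S) (hne : b₁ ≠ b₂) (ha1 : a₁ ∈ W) (ha2 : a₂ ∈ W)
    (h11 : G.Adj b₁ a₁) (h12 : G.Adj b₁ a₂) (h21 : G.Adj b₂ a₁) (h22 : G.Adj b₂ a₂)
    (h : G.Adj a₁ a₂) : Adm G W S T (D - 1) := by
  rcases c.diamond_or hSI hTI h1 h2 hne ha1 ha2 h11 h12 h21 h22 h with h' | hT
  · exact h'
  have h1T : b₁ ∈ T := by simp [hT]
  have h2T : b₂ ∈ T := by simp [hT]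
  rcases c.symm.diamond_or hTI hSI h1T h2T hne ha1 ha2 h11 h12 h21 h22 h with h' | hS
  · exact h'.symm
  obtain rfl : S = T := hS.trans hT.symm
  have ha : a₁ ∈ W \ S := Finset.mem_sdiff.2 ⟨ha1, fun h => hSI _ h1 _ h h11⟩
  have hCS : ∀ v ∈ comp G (W \ S) a₁, v ∉ S := fun v hv =>
    (Finset.mem_sdiff.1 (comp_subset hv)).2
  refine c.split (u := b₂) (Q := {b₁}) (R₁ := {b₁}) (R₂ := {b₂})
    (comp_subset.trans Finset.sdiff_subset) (comp_conn ha) (c.hS h2) (fun h => hCS _ h h2)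
    ⟨a₁, self_mem_comp ha, h21⟩ ?_ hCS hCS (by simp)
    (by simpa using Exits.trivial (by simpa using h1) le_rfl)
    (Exits.trivial (by simpa using h2) le_rfl) (by simpa using hne) ?_ ?_
    (by simpa using c.hS h1) (by simpa using c.hS h2)
  · intro v hv w hw hvw
    refine (comp_sdiff_nbr hv hw hvw).imp id fun h => ?_
    simpa [hS] using h
  · simpa using fun h => hCS _ h h1
  · simpa using fun h => hCS _ h h2

/-! ### Complete bipartite graphs at the roots -/

lemma bip_exits_even {A B S : Finset V} {r : ℕ} (hAB : ∀ a ∈ A, ∀ b ∈ B, G.Adj a b) (hB : B ⊆ S)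
    (hr : r ≤ B.card) (hr' : r ≤ A.card + 1) : Exits G (B ∪ A) S B r := by
  refine ⟨0, 2, Or.inr rfl, fun e he i hi => ?_⟩
  obtain ⟨s, hs, hp⟩ := bip_path i A B hAB (by omega) (by omega) e he
  exact ⟨s, hB hs, by rwa [show 0 + i * 2 = 2 * i by ring]⟩

lemma bip_exits_odd {A B S : Finset V} {r : ℕ} (hAB : ∀ a ∈ A, ∀ b ∈ B, G.Adj a b) (hB : B ⊆ S)
    (hr : r ≤ B.card) (hr' : r ≤ A.card) : Exits G (B ∪ A) S A r := by
  refine ⟨1, 2, Or.inr rfl, fun e he i hi => ?_⟩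
  obtain ⟨s, hs, hp⟩ := bip_path_odd hAB (by omega : i < B.card) (by omega) he
  exact ⟨s, hB hs, by rwa [show 1 + i * 2 = 2 * i + 1 by ring]⟩

/-- A part `A` of `W` that avoids `T`, meets `S`, and is separated from the rest by `a` and one
further vertex `w`; the two vertices `b₁`, `b₂` stay outside. -/
def Pocket (G : SimpleGraph V) (W S T : Finset V) (a b₁ b₂ : V) (A : Finset V) (w : V) : Prop :=
  A ⊆ W ∧ a ∉ A ∧ b₁ ∉ A ∧ b₂ ∉ A ∧ (∀ v ∈ A, v ∉ T) ∧ (∃ s ∈ A, s ∈ S) ∧ w ∈ W ∧ w ∉ A ∧ w ≠ a ∧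
    ∀ v ∈ A, ∀ x ∈ W, G.Adj v x → x ∈ A ∨ x = a ∨ x = w

/-- If `a` has two neighbours outside a part `A` that avoids `T`, meets `S`, and is separated
from the rest by `a` and one further vertex, then two paths from `a` to `T` outside a largest such
part combine with the paths that the induction hypothesis provides inside it. -/
lemma Ctx.pocket {W S T : Finset V} {D : ℕ} (c : Ctx G W S T D) {a b₁ b₂ : V} (ha : a ∈ W)
    (h1 : b₁ ∈ W) (h2 : b₂ ∈ W) (hne : b₁ ≠ b₂) (ha1 : G.Adj a b₁) (ha2 : G.Adj a b₂)
    (hex : ∃ A w, Pocket G W S T a b₁ b₂ A w) : Adm G W S T (D - 1) := by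
  classical
  obtain ⟨A, hAF, hmax⟩ := Finset.exists_max_image
    (W.powerset.filter fun A => ∃ w, Pocket G W S T a b₁ b₂ A w) Finset.card (by
      obtain ⟨A, w, h⟩ := hex
      exact ⟨A, by simpa using ⟨h.1, w, h⟩⟩)
  simp only [Finset.mem_filter, Finset.mem_powerset] at hAF hmax
  obtain ⟨-, w, hAW, haA, h1A, h2A, hAT, ⟨s, hs, hsS⟩, hwW, hwA, hwa, hbd⟩ := hAF
  set R := (W.erase a) \ A with hR
  have memR : ∀ v, v ∈ R ↔ v ∈ W ∧ v ≠ a ∧ v ∉ A := fun v => by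
    simp only [hR, Finset.mem_sdiff, Finset.mem_erase]; tauto
  have hRW : R ⊆ W := fun v hv => ((memR v).1 hv).1
  have hwR : w ∈ R := (memR w).2 ⟨hwW, hwa, hwA⟩
  have h1R : b₁ ∈ R := (memR _).2 ⟨h1, ha1.ne', h1A⟩
  have h2R : b₂ ∈ R := (memR _).2 ⟨h2, ha2.ne', h2A⟩
  have hRc : Conn G R := by
    refine (c.conn2 a ha).sdiff (u := w) (by simp [hwa, hwW]) (fun v hv => ?_) ?_
    · simp only [Finset.mem_erase]
      exact ⟨fun h => hwA (h ▸ hv), fun h => haA (h ▸ hv), hAW hv⟩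
    · intro v hv x hx hvx
      simp only [Finset.mem_erase] at hx
      rcases hbd v hv x hx.2.2 hvx with h | h | h
      · exact h
      · exact absurd h hx.2.1
      · exact absurd h hx.1
  obtain ⟨t, htT, hta⟩ := c.symm.exists_ne a
  have htR : t ∈ R := (memR t).2 ⟨c.hT htT, hta, fun h => hAT t h htT⟩
  -- degrees in the remainder `R` drop by at most one, except at `w`, and `D ≥ 4`
  have hRT : Adm G R (nb G {a}) T 2 := by
    refine two_paths (R.card + 1) R (nb G {a}) T w (by omega) ⟨⟨w, hwR⟩, ?_, ?_⟩ ?_ ?_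
    · intro X hX hn hc
      rw [hRc X hX hn hc]
      exact ⟨⟨b₁, h1R, mem_nb_single.2 ha1⟩, t, htR, htT⟩
    · intro b hb X hX hn hc
      by_contra hcon
      push Not at hcon
      have hXR : X ⊆ R := hX.trans (Finset.erase_subset _ _)
      have hbX : b ∉ X := fun h => by simpa using hX h
      have hbR := (memR b).1 hb
      have hXn : ∀ v ∈ X, ∀ x ∈ W, G.Adj v x → x ∈ X ∨ x = b ∨ (v = w ∧ x ∈ A) := by
        intro v hv x hx hvx
        have hxa : x ≠ a := fun h => (hcon v hv).1 (mem_nb_single.2 (h ▸ hvx.symm))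
        by_cases hxA : x ∈ A
        · have hvR := (memR v).1 (hXR hv)
          have := hbd x hxA v hvR.1 hvx.symm
          simp only [hvR.2.1, hvR.2.2, false_or] at this
          exact Or.inr (Or.inr ⟨this, hxA⟩)
        · by_cases hxb : x = b
          · exact Or.inr (Or.inl hxb)
          · exact Or.inl (hc v hv x (Finset.mem_erase.2 ⟨hxb, (memR x).2 ⟨hx, hxa, hxA⟩⟩) hvx)
      by_cases hwX : w ∈ X
      -- a part of `R` containing `w` and missed by both roots would enlarge `A`
      · have hP : Pocket G W S T a b₁ b₂ (A ∪ X) b := by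
          refine ⟨Finset.union_subset hAW (hXR.trans hRW), ?_, ?_, ?_, ?_,
            ⟨s, Finset.mem_union_left _ hs, hsS⟩, hbR.1, ?_, hbR.2.1, ?_⟩
          · rw [Finset.mem_union, not_or]
            exact ⟨haA, fun h => ((memR a).1 (hXR h)).2.1 rfl⟩
          · rw [Finset.mem_union, not_or]
            exact ⟨h1A, fun h => (hcon _ h).1 (mem_nb_single.2 ha1)⟩
          · rw [Finset.mem_union, not_or]
            exact ⟨h2A, fun h => (hcon _ h).1 (mem_nb_single.2 ha2)⟩
          · intro v hv
            rcases Finset.mem_union.1 hv with h | h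
            · exact hAT v h
            · exact (hcon v h).2
          · rw [Finset.mem_union, not_or]
            exact ⟨hbR.2.2, hbX⟩
          · intro v hv x hx hvx
            rw [Finset.mem_union] at hv ⊢
            rcases hv with hv | hv
            · rcases hbd v hv x hx hvx with h | h | h
              · exact Or.inl (Or.inl h)
              · exact Or.inr (Or.inl h)
              · exact Or.inl (Or.inr (h ▸ hwX))
            · rcases hXn v hv x hx hvx with h | h | h
              · exact Or.inl (Or.inr h)
              · exact Or.inr (Or.inr h)
              · exact Or.inl (Or.inl h.2)
        have hle := hmax (A ∪ X) ⟨hP.1, b, hP⟩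
        have hlt : A.card < (A ∪ X).card := Finset.card_lt_card
          ⟨Finset.subset_union_left, fun h => hwA (h (Finset.mem_union_right _ hwX))⟩
        omega
      · refine c.not_cl (u := b) (w := a) hbR.1 (hXR.trans hRW) hbX hn ha hbR.2.1.symm
          (fun h => ((memR a).1 (hXR h)).2.1 rfl) ?_
        intro v hv x hx hvx
        rw [Finset.mem_erase] at hx
        rcases hXn v hv x hx.2 hvx with h | h | h
        · exact h
        · exact absurd h hx.1
        · exact absurd (h.1 ▸ hv) hwX
    · by_cases h : b₁ = w
      · exact ⟨b₂, h2R, fun h' => hne (h.trans h'.symm)⟩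
      · exact ⟨b₁, h1R, h⟩
    · intro v hv hvw
      have hvR := (memR v).1 hv
      have hvn : ∀ x ∈ W, G.Adj v x → x ∈ R ∨ x = a := by
        intro x hx hvx
        by_cases hxa : x = a
        · exact Or.inr hxa
        · refine Or.inl ((memR x).2 ⟨hx, hxa, fun hxA => ?_⟩)
          have := hbd x hxA v hvR.1 hvx.symm
          tauto
      have h4 := c.hD
      have hd := c.deg v hvR.1
      have : dg G W S T v ≤ dg G R (nb G {a}) T v + 1 := by
        by_cases hav : G.Adj a v
        · refine dg_le (R := {a}) (fun x hx hvx => (hvn x hx hvx).imp id (by simp)) ?_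
          simp only [Finset.card_singleton, mem_nb_single, hav, if_true]
          split_ifs <;> omega
        · refine dg_le (R := ∅) (fun x hx hvx => Or.inl ((hvn x hx hvx).resolve_right ?_)) ?_
          · rintro rfl
            exact hav hvx.symm
          · simp only [Finset.card_empty]
            split_ifs <;> omega
      omega
  -- inside `A` only the neighbour `w` is lost, which the second path through `R` makes up for
  set A₀ := comp G A s with hA0
  have hA0A : A₀ ⊆ A := comp_subset
  have hsA0 : s ∈ A₀ := self_mem_comp hs
  have haA0 : a ∉ A₀ := fun h => haA (hA0A h)
  have hwA0 : w ∉ A₀ := fun h => hwA (hA0A h)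
  have hbd0 : ∀ v ∈ A₀, ∀ x ∈ W, G.Adj v x → x ∈ A₀ ∨ x = a ∨ x = w := by
    intro v hv x hx hvx
    exact (hbd v (hA0A hv) x hx hvx).imp (fun h => comp_cl v hv x h hvx) id
  have hdisj : Disjoint A₀ R := Finset.disjoint_left.2 fun v hv hv' =>
    ((memR v).1 hv').2.2 (hA0A hv)
  have hA0a : ∃ v ∈ A₀, v ∈ nb G {a} := by
    by_contra hcon
    push Not at hcon
    refine c.not_cl (u := w) (w := a) hwW (hA0A.trans hAW) hwA0 ⟨s, hsA0⟩ ha hwa.symm haA0 ?_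
    intro v hv x hx hvx
    rw [Finset.mem_erase] at hx
    rcases hbd0 v hv x hx.2 hvx with h | h | h
    · exact h
    · exact absurd (mem_nb_single.2 (h ▸ hvx.symm)) (hcon v hv)
    · exact absurd h hx.1
  rcases c.sub_or (l := 1) (X := S) (Y := nb G {a}) (hA0A.trans hAW) ha haA0 (comp_conn hs)
    ⟨s, hsA0, hsS⟩ hA0a (by
      intro v hv
      have hvT := hAT v (hA0A hv)
      by_cases hav : G.Adj a v
      · refine dg_le (R := {a, w}) (fun x hx hvx => (hbd0 v hv x hx hvx).imp id (by simp)) ?_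
        have := Finset.card_le_two (a := a) (b := w)
        simp only [hvT, mem_nb_single, hav, if_true, if_false]
        omega
      · refine dg_le (R := {w}) (fun x hx hvx => (hbd0 v hv x hx hvx).imp id ?_) ?_
        · rintro (rfl | rfl)
          · exact absurd hvx.symm hav
          · simp
        · simp only [hvT, mem_nb_single, hav, if_false, Finset.card_singleton]
          omega) with h | ⟨u, hu, A₂, hA2, hn, hc2, hcl2, hA2S, hA2a, -⟩
  · refine ((h.to_exits haA0).glue (W := W) hRT (le_max_left _ _) (by norm_num)
      (Finset.disjoint_insert_left.2 ⟨fun h => ((memR a).1 h).2.1 rfl, hdisj⟩)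
      (Finset.insert_subset ha (hA0A.trans hAW)) hRW).mono le_rfl le_rfl le_rfl ?_
    omega
  · -- a part `A₂` of `A₀` attached at `u` and seen by neither root is entered through `u` and left
    -- through `w`
    have hA20 : A₂ ⊆ A₀ := hA2.trans (Finset.erase_subset _ _)
    have huA2 : u ∉ A₂ := fun h => by simpa using hA2 h
    have hbd2 : ∀ v ∈ A₂, ∀ x ∈ W, G.Adj v x → x ∈ A₂ ∨ x = u ∨ x = w := by
      intro v hv x hx hvx
      rcases hbd0 v (hA20 hv) x hx hvx with h | h | h
      · by_cases hxu : x = u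
        · exact Or.inr (Or.inl hxu)
        · exact Or.inl (hcl2 v hv x (Finset.mem_erase.2 ⟨hxu, h⟩) hvx)
      · exact absurd (mem_nb_single.2 (h ▸ hvx.symm)) (hA2a v hv)
      · exact Or.inr (Or.inr h)
    refine c.inst (A := A₂) (Q := {u}) (R₁ := A₀ \ A₂) (R₂ := R) (u := w) (w := a) (r := 1)
      (hA20.trans (hA0A.trans hAW)) hc2 hwW (fun h => hwA0 (hA20 h)) ?_
      (fun v hv x hx hvx => by simpa using hbd2 v hv x hx hvx)
      (fun v hv => hAT v (hA0A (hA20 hv))) ha hwa.symm (fun h => haA0 (hA20 h)) ?_ le_rfl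
      (((comp_conn hs).sdiff hu hA2 hcl2).exits (Finset.mem_sdiff.2 ⟨hu, huA2⟩)
        (Finset.mem_sdiff.2 ⟨hsA0, fun h => hA2S s h hsS⟩) hsS)
      (hRc.exits hwR htR htT) (hdisj.mono_left Finset.sdiff_subset) Finset.sdiff_disjoint
      (hdisj.mono_left hA20).symm (Finset.sdiff_subset.trans (hA0A.trans hAW)) hRW
    · by_contra hcon
      push Not at hcon
      refine c.not_cl (u := u) (w := a) (hAW (hA0A hu)) (hA20.trans (hA0A.trans hAW)) huA2 hn ha
        (fun h => haA0 (h ▸ hu)) (fun h => haA0 (hA20 h)) ?_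
      intro v hv x hx hvx
      rw [Finset.mem_erase] at hx
      rcases hbd2 v hv x hx.2 hvx with h | h | h
      · exact h
      · exact absurd h hx.1
      · exact absurd (h ▸ hvx.symm) (hcon v hv)
    · intro v hv
      simpa [hA2S v hv] using card_nbrs_le (G := G) (Q := {u}) v

/-- The members of `S` adjacent to all of `A`. -/
def cn (G : SimpleGraph V) [DecidableRel G.Adj] (S A : Finset V) : Finset V :=
  S.filter fun s => ∀ a ∈ A, G.Adj a s

/-- No two members of `S` have two adjacent common neighbours in `W`. -/
def NoDiamond (G : SimpleGraph V) (W S : Finset V) : Prop :=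
  ∀ b₁ ∈ S, ∀ b₂ ∈ S, b₁ ≠ b₂ → ∀ a₁ ∈ W, ∀ a₂ ∈ W, G.Adj b₁ a₁ → G.Adj b₁ a₂ →
    G.Adj b₂ a₁ → G.Adj b₂ a₂ → ¬ G.Adj a₁ a₂

/-- Without diamonds, a vertex with two neighbours in `B` has none in a set `A` complete
to `B`. -/
lemma NoDiamond.nbrs {W S A B : Finset V} (h : NoDiamond G W S) (hB : B ⊆ S) (hA : A ⊆ W)
    (hAB : ∀ a ∈ A, ∀ b ∈ B, G.Adj a b) {v : V} (hv : v ∈ W)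
    (h2 : 2 ≤ (B.filter (G.Adj v)).card) : (A.filter (G.Adj v)).card = 0 := by
  rw [Finset.card_eq_zero, Finset.filter_eq_empty_iff]
  intro a ha hva
  obtain ⟨b₁, hb1, b₂, hb2, hne⟩ := Finset.one_lt_card.1 h2
  rw [Finset.mem_filter] at hb1 hb2
  exact h b₁ (hB hb1.1) b₂ (hB hb2.1) hne v hv a (hA ha) hb1.2.symm (hAB a ha b₁ hb1.1).symm
    hb2.2.symm (hAB a ha b₂ hb2.1).symm hva

/-- Let `A` be largest such that its common neighbourhood `B` in `S` has at least `#A + 1` members.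
By maximality an outside vertex has at most `#A + 1` neighbours in `B`. The two sides provide the
paths unless `T` lies in the bipartite graph. If `#A = 1`, the exits in `A` have rank one only, too
little for a part that meets `S`; such parts are dealt with by `Ctx.pocket`. -/
lemma Ctx.bip_or {W S T : Finset V} {D : ℕ} (c : Ctx G W S T D)
    (hSI : ∀ x ∈ S, ∀ y ∈ S, ¬ G.Adj x y) (hND : NoDiamond G W S) :
    Adm G W S T (D - 1) ∨ ∃ A ⊆ W, A.card + 1 ≤ (cn G S A).card ∧
      (∀ v ∈ W, v ∉ A → v ∉ S → ((cn G S A).filter (G.Adj v)).card ≤ A.card + 1) ∧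
      T ⊆ cn G S A ∪ A := by
  classical
  obtain ⟨A, hA, hmax⟩ := Finset.exists_max_image
    (W.powerset.filter fun A => A.card + 1 ≤ (cn G S A).card) Finset.card ⟨∅, by
      have := c.hS2
      have h0 : cn G S ∅ = S := by simp [cn]
      simp only [Finset.mem_filter, Finset.mem_powerset, h0, Finset.card_empty]
      exact ⟨Finset.empty_subset _, by omega⟩⟩
  simp only [Finset.mem_filter, Finset.mem_powerset] at hA hmax
  obtain ⟨hAW, hcard⟩ := hA
  set B := cn G S A with hBdef
  have hBS : B ⊆ S := Finset.filter_subset _ _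
  have hAB : ∀ a ∈ A, ∀ b ∈ B, G.Adj a b := fun a ha b hb => (Finset.mem_filter.1 hb).2 a ha
  have hBn : B.Nonempty := Finset.card_pos.1 (by omega)
  have hBA : Disjoint B A := Finset.disjoint_left.2 fun v hv hv' => (hAB v hv' v hv).ne rfl
  have hle : ∀ v ∈ W, v ∉ A → v ∉ S → (B.filter (G.Adj v)).card ≤ A.card + 1 := by
    intro v hv hvA _
    by_contra hcon
    have hsub : B.filter (G.Adj v) ⊆ cn G S (insert v A) := by
      intro b hb
      rw [Finset.mem_filter] at hb
      refine Finset.mem_filter.2 ⟨hBS hb.1, fun x hx => ?_⟩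
      rcases Finset.mem_insert.1 hx with rfl | hx
      · exact hb.2
      · exact hAB x hx b hb.1
    have hc := Finset.card_le_card hsub
    have := hmax (insert v A) ⟨Finset.insert_subset hv hAW, by
      rw [Finset.card_insert_of_notMem hvA]; omega⟩
    rw [Finset.card_insert_of_notMem hvA] at this
    omega
  by_cases hT : T ⊆ B ∪ A
  · exact Or.inr ⟨A, hAW, hcard, hle, hT⟩
  left
  obtain ⟨t, ht, htH⟩ := Finset.not_subset.1 hT
  have htW : t ∈ W \ (B ∪ A) := Finset.mem_sdiff.2 ⟨c.hT ht, htH⟩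
  have hE1 : Exits G (B ∪ A) S B (A.card + 1) := bip_exits_even hAB hBS hcard le_rfl
  have hE2 : Exits G (B ∪ A) S A A.card := bip_exits_odd hAB hBS (by omega) le_rfl
  have hSA : ∀ v ∈ S, v ∉ B → (A.filter (G.Adj v)).card + 1 ≤ A.card := by
    intro v hv hvB
    have hss : A.filter (G.Adj v) ⊂ A := by
      refine (Finset.filter_subset _ _).ssubset_of_ne fun h => hvB ?_
      rw [Finset.filter_eq_self] at h
      exact Finset.mem_filter.2 ⟨hv, fun a ha => (h a ha).symm⟩
    exact Finset.card_lt_card hss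
  have hl1 : ∀ v ∈ W \ (B ∪ A), ((B ∪ A).filter (G.Adj v)).card + (if v ∈ S then 1 else 0)
      ≤ (A.card + 1 - 1) + (if v ∈ nb G B then 1 else 0) := by
    intro v hv
    rw [Finset.mem_sdiff, Finset.mem_union, not_or] at hv
    rw [Finset.filter_union, Finset.card_union_of_disjoint (Finset.disjoint_filter_filter hBA)]
    by_cases hvS : v ∈ S
    · have h0 : B.filter (G.Adj v) = ∅ :=
        Finset.filter_eq_empty_iff.2 fun w hw => hSI v hvS w (hBS hw)
      have := hSA v hvS hv.2.1
      simp only [h0, Finset.card_empty, hvS, if_true]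
      omega
    · simp only [hvS, if_false]
      have k1 := hle v hv.1 hv.2.2 hvS
      have k2 := hND.nbrs hBS hAW hAB hv.1
      have k3 := Finset.card_filter_le A (G.Adj v)
      rcases Finset.eq_empty_or_nonempty (B.filter (G.Adj v)) with h0 | ⟨w, hw⟩
      · simp only [h0, Finset.card_empty]; omega
      · rw [Finset.mem_filter] at hw
        have : v ∈ nb G B := mem_nb.2 ⟨w, hw.1, hw.2.symm⟩
        simp only [this, if_true]
        omega
  rcases Nat.lt_trichotomy A.card 1 with h0 | h1 | h2
  · have hA0 : A = ∅ := Finset.card_eq_zero.1 (by omega)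
    refine c.tt (r₂ := 2) (hBS.trans c.hS) hAW hBn (by omega) (by omega) hE1
      ⟨0, 1, Or.inl rfl, by simp [hA0]⟩ htW ht hl1 ?_
    intro v _ _
    simp only [hA0, Finset.filter_empty, Finset.card_empty]
    split_ifs <;> omega
  · obtain ⟨a, hAa⟩ := Finset.card_eq_one.1 h1
    have ha : a ∈ A := by simp [hAa]
    obtain ⟨b₁, hb1, b₂, hb2, hne⟩ := Finset.one_lt_card.1 (by omega : 1 < B.card)
    have hCH : ∀ v ∈ comp G (W \ (B ∪ A)) t, v ∈ W ∧ v ∉ B ∧ v ∉ A := fun v hv => by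
      simpa using comp_subset hv
    have hba : b₁ ≠ a := (hAB a ha b₁ hb1).ne'
    rcases c.tt_or (hBS.trans c.hS) hAW hBn (by omega) hE1 htW ht hl1 with
      h | h | ⟨u, hu, A', hA', hn', hc, hcl, hf, hT', hadj⟩
    · exact h
    · refine (c.not_cl (hAW ha) (fun v hv => (hCH v hv).1) (fun h => (hCH a h).2.2 ha)
        ⟨t, self_mem_comp htW⟩ (c.hS (hBS hb1)) hba (fun h => (hCH b₁ h).2.1 hb1) ?_).elim
      intro v hv w hw hvw
      rw [Finset.mem_erase] at hw
      rcases comp_sdiff_nbr hv hw.2 hvw with h' | h'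
      · exact h'
      · rcases Finset.mem_union.1 h' with h' | h'
        · exact absurd (mem_nb.2 ⟨w, h', hvw.symm⟩) (h v hv)
        · rw [hAa, Finset.mem_singleton] at h'
          exact absurd h' hw.1
    · have hA'C : A' ⊆ comp G (W \ (B ∪ A)) t := hA'.trans (Finset.erase_subset _ _)
      by_cases hAS : ∃ s ∈ A', s ∈ S
      · refine c.pocket (hAW ha) (c.hS (hBS hb1)) (c.hS (hBS hb2)) hne (hAB a ha b₁ hb1)
          (hAB a ha b₂ hb2) ⟨A', u, fun v hv => (hCH v (hA'C hv)).1,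
            fun h => (hCH _ (hA'C h)).2.2 ha, fun h => (hCH _ (hA'C h)).2.1 hb1,
            fun h => (hCH _ (hA'C h)).2.1 hb2, hT', hAS, (hCH u hu).1,
            fun h => by simpa using hA' h, fun h => (hCH u hu).2.2 (h ▸ ha), ?_⟩
        intro v hv x hx hvx
        rcases comp_sdiff_nbr (hA'C hv) hx hvx with h' | h'
        · by_cases hxu : x = u
          · exact Or.inr (Or.inr hxu)
          · exact Or.inl (hcl v hv x (Finset.mem_erase.2 ⟨hxu, h'⟩) hvx)
        · rcases Finset.mem_union.1 h' with h' | h'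
          · exact absurd (mem_nb.2 ⟨x, h', hvx.symm⟩) (hf v hv)
          · rw [hAa, Finset.mem_singleton] at h'
            exact Or.inr (Or.inl h')
      · push Not at hAS
        refine c.tt_f2 (r := A.card) (hBS.trans c.hS) hAW hBn (by omega) hE2 htW ht hu hA' hc hcl hf
          hT' hadj fun v hv => ?_
        simpa [hAS v hv] using card_nbrs_le (G := G) (Q := A) v
  · refine c.tt (hBS.trans c.hS) hAW hBn (by omega) (by omega) hE1 hE2 htW ht hl1 ?_
    intro v hv _
    rw [Finset.mem_sdiff, Finset.mem_union, not_or] at hv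
    have k1 := card_nbrs_le (G := G) (Q := A) v
    by_cases hvS : v ∈ S
    · have k2 := hSA v hvS hv.2.1
      rcases Finset.eq_empty_or_nonempty (A.filter (G.Adj v)) with h0 | ⟨w, hw⟩
      · simp only [h0, Finset.card_empty, hvS, if_true]; omega
      · rw [Finset.mem_filter] at hw
        have : v ∈ nb G A := mem_nb.2 ⟨w, hw.1, hw.2.symm⟩
        simp only [this, hvS, if_true]; omega
    · simp only [hvS, if_false]; omega

/-! ### Equal terminal sets -/

/-- The terminal sets coincide, `A` is complete to `S`, and some vertex lies outside `S ∪ A`. The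
paths go through the component of that vertex. They start at a member `p` of `S`, and at the other end
they are prolonged inside the complete bipartite graph between `A` and the rest of `S`. -/
lemma Ctx.same_core {W S A : Finset V} {D : ℕ} (c : Ctx G W S S D) (hND : NoDiamond G W S)
    (hA : A ⊆ W) (hAS : ∀ a ∈ A, ∀ s ∈ S, G.Adj a s) (hcard : A.card + 2 ≤ S.card)
    (hle : ∀ v ∈ W, v ∉ A → v ∉ S →
      (S.filter (G.Adj v)).card ≤ A.card + 1 ∨ S.card = A.card + 2)
    {x : V} (hx : x ∈ W \ (S ∪ A)) : Adm G W S S (D - 1) := by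
  set C := comp G (W \ (S ∪ A)) x with hC
  have hCW : C ⊆ W := comp_subset.trans Finset.sdiff_subset
  have hCH : ∀ v ∈ C, v ∉ S ∧ v ∉ A := fun v hv => by
    simpa using (Finset.mem_sdiff.1 (comp_subset hv)).2
  have hCc : Conn G C := comp_conn hx
  have hxC : x ∈ C := self_mem_comp hx
  have hSA : ∀ v ∈ S, v ∉ A := fun v hv hv' => (hAS v hv' v hv).ne rfl
  have hbd : ∀ v ∈ C, ∀ w ∈ W, G.Adj v w → w ∈ C ∨ w ∈ S ∨ w ∈ A := fun v hv w hw hvw =>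
    (comp_sdiff_nbr hv hw hvw).imp id Finset.mem_union.1
  have hSe : ∀ p ∈ S, (S.erase p).card + 1 = S.card := fun p hp => by
    rw [Finset.card_erase_of_mem hp]; omega
  have hAe : ∀ p, ∀ a ∈ A, ∀ s ∈ S.erase p, G.Adj a s := fun p a ha s hs =>
    hAS a ha s (Finset.mem_of_mem_erase hs)
  by_cases hp : ∃ p ∈ S, ∃ y ∈ C, G.Adj p y
  -- `p` sees the component; the case distinction below is whether another member of `S` does
  · obtain ⟨p, hp, y, hy, hpy⟩ := hp
    have hpC : p ∉ C := fun h => (hCH p h).1 hp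
    have hR1 : (S.erase p) ∪ A ⊆ W :=
      Finset.union_subset ((Finset.erase_subset _ _).trans c.hS) hA
    have hR1C : Disjoint ((S.erase p) ∪ A) C := by
      refine Finset.disjoint_left.2 fun v hv hv' => ?_
      rcases Finset.mem_union.1 hv with h | h
      · exact (hCH v hv').1 (Finset.mem_of_mem_erase h)
      · exact (hCH v hv').2 h
    have hpR1 : p ∉ (S.erase p) ∪ A := by simp [hSA p hp]
    have hodd : Exits G ((S.erase p) ∪ A) S A A.card :=
      bip_exits_odd (hAe p) (Finset.erase_subset _ _) (by have := hSe p hp; omega) le_rfl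
    have hpp : Exits G {p} S {p} 1 := Exits.trivial (by simpa using hp) le_rfl
    by_cases hp' : ∃ p' ∈ S, p' ≠ p ∧ ∃ y ∈ C, G.Adj p' y
    · obtain ⟨p', hp', hne, y', hy', hpy'⟩ := hp'
      rcases c.sub_or (l := A.card) (X := nb G {p}) (Y := nb G (S.erase p)) hCW (c.hS hp) hpC hCc
        ⟨y, hy, mem_nb_single.2 hpy⟩
        ⟨y', hy', mem_nb.2 ⟨p', Finset.mem_erase.2 ⟨hne, hp'⟩, hpy'⟩⟩ (by
          intro v hv
          refine dg_le (R := (S ∪ A).filter (G.Adj v)) (fun w hw hvw =>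
            (comp_sdiff_nbr hv hw hvw).imp id fun h => Finset.mem_filter.2 ⟨h, hvw⟩) ?_
          have hu : ((S ∪ A).filter (G.Adj v)).card
              ≤ (S.filter (G.Adj v)).card + (A.filter (G.Adj v)).card := by
            rw [Finset.filter_union]; exact Finset.card_union_le _ _
          have k1 := hle v (hCW hv) (hCH v hv).2 (hCH v hv).1
          have k2 := hND.nbrs le_rfl hA hAS (hCW hv)
          have k3 := Finset.card_filter_le A (G.Adj v)
          have k4 := Finset.card_filter_le S (G.Adj v)
          have k5 : ∀ s ∈ S, G.Adj v s → v ∈ nb G {p} ∨ v ∈ nb G (S.erase p) := by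
            intro s hs hvs
            by_cases h : s = p
            · exact Or.inl (mem_nb_single.2 (h ▸ hvs.symm))
            · exact Or.inr (mem_nb.2 ⟨s, Finset.mem_erase.2 ⟨h, hs⟩, hvs.symm⟩)
          have k6 : 1 ≤ (S.filter (G.Adj v)).card → v ∈ nb G {p} ∨ v ∈ nb G (S.erase p) := by
            intro h
            obtain ⟨s, hs⟩ := Finset.card_pos.1 h
            rw [Finset.mem_filter] at hs
            exact k5 s hs.1 hs.2
          have k7 : (S.filter (G.Adj v)).card = S.card →
              v ∈ nb G {p} ∧ v ∈ nb G (S.erase p) := by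
            intro h
            have := Finset.filter_eq_self.1
              (Finset.eq_of_subset_of_card_le (Finset.filter_subset (G.Adj v) S) h.ge)
            exact ⟨mem_nb_single.2 (this p hp).symm,
              mem_nb.2 ⟨p', Finset.mem_erase.2 ⟨hne, hp'⟩, (this p' hp').symm⟩⟩
          simp only [(hCH v hv).1, if_false]
          by_cases m1 : v ∈ nb G {p} <;> by_cases m2 : v ∈ nb G (S.erase p) <;>
            simp only [m1, m2, if_true, if_false, or_false, or_true, and_false, and_true,
              imp_false] at k6 k7 ⊢ <;> omega) with h | ⟨u, hu, A', hA', hn', hc', hcl', hX, hY, hadj⟩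
      · have heven : Exits G ((S.erase p) ∪ A) S (S.erase p) (A.card + 1) :=
          bip_exits_even (hAe p) (Finset.erase_subset _ _) (by have := hSe p hp; omega) le_rfl
        refine (sandwich h hpp heven (le_max_left _ _) le_rfl (by omega)
          (Finset.disjoint_singleton_left.2 hpR1) (Finset.disjoint_singleton_left.2 hpC) hR1C
          (Finset.singleton_subset_iff.2 (c.hS hp)) hR1 hCW).mono le_rfl le_rfl le_rfl ?_
        omega
      · have hA'C : A' ⊆ C := hA'.trans (Finset.erase_subset _ _)
        have huA' : u ∉ A' := fun h => by simpa using hA' h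
        have hSn : ∀ v ∈ A', ∀ s ∈ S, ¬ G.Adj v s := by
          intro v hv s hs hvs
          by_cases h : s = p
          · exact hX v hv (mem_nb_single.2 (h ▸ hvs.symm))
          · exact hY v hv (mem_nb.2 ⟨s, Finset.mem_erase.2 ⟨h, hs⟩, hvs.symm⟩)
        have hbd' : ∀ v ∈ A', ∀ w ∈ W, G.Adj v w → w ∈ A' ∨ w ∈ A ∨ w = u := by
          intro v hv w hw hvw
          rcases hbd v (hA'C hv) w hw hvw with h | h | h
          · by_cases hwu : w = u
            · exact Or.inr (Or.inr hwu)
            · exact Or.inl (hcl' v hv w (Finset.mem_erase.2 ⟨hwu, h⟩) hvw)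
          · exact absurd hvw (hSn v hv w h)
          · exact Or.inr (Or.inl h)
        obtain ⟨n, hn⟩ := (hCc.sdiff hu hA' hcl').path
          (Finset.mem_sdiff.2 ⟨hy, fun h => hSn y h p hp hpy.symm⟩)
          (Finset.mem_sdiff.2 ⟨hu, huA'⟩)
        refine c.split (Q := A) (R₁ := (S.erase p) ∪ A) (R₂ := insert p (C \ A')) (u := u)
          (hA'C.trans hCW) hc' (hCW hu) huA' hadj hbd' (fun v hv => (hCH v (hA'C hv)).1)
          (fun v hv => (hCH v (hA'C hv)).1) ?_ hodd
          (Exits.of_path hp (hn.cons (fun h => hpC (Finset.mem_sdiff.1 h).1) hpy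
            (Finset.subset_insert _ _) (Finset.mem_insert_self _ _)))
          (Finset.disjoint_insert_right.2 ⟨hpR1, hR1C.mono_right Finset.sdiff_subset⟩)
          (hR1C.mono_right hA'C)
          (Finset.disjoint_insert_left.2 ⟨fun h => hpC (hA'C h), Finset.sdiff_disjoint⟩) hR1
          (Finset.insert_subset (c.hS hp) (Finset.sdiff_subset.trans hCW))
        by_contra hQ
        rw [Finset.not_nonempty_iff_eq_empty] at hQ
        refine c.not_cl (hCW hu) (hA'C.trans hCW) huA' hn' (c.hS hp) (fun h => hpC (h ▸ hu))
          (fun h => hpC (hA'C h)) fun v hv w hw hvw => ?_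
        rw [Finset.mem_erase] at hw
        rcases hbd' v hv w hw.2 hvw with h | h | h
        · exact h
        · simp [hQ] at h
        · exact absurd h hw.1
    · push Not at hp'
      have hbd' : ∀ v ∈ C, ∀ w ∈ W, G.Adj v w → w ∈ C ∨ w ∈ A ∨ w = p := by
        intro v hv w hw hvw
        rcases hbd v hv w hw hvw with h | h | h
        · exact Or.inl h
        · by_cases hwp : w = p
          · exact Or.inr (Or.inr hwp)
          · exact absurd hvw.symm (hp' w h hwp v hv)
        · exact Or.inr (Or.inl h)
      refine c.split (Q := A) (R₁ := (S.erase p) ∪ A) (R₂ := {p}) (u := p) hCW hCc (c.hS hp) hpC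
        ⟨y, hy, hpy⟩ hbd' (fun v hv => (hCH v hv).1) (fun v hv => (hCH v hv).1) ?_ hodd hpp
        (Finset.disjoint_singleton_right.2 hpR1) hR1C (Finset.disjoint_singleton_left.2 hpC) hR1
        (Finset.singleton_subset_iff.2 (c.hS hp))
      by_contra hQ
      rw [Finset.not_nonempty_iff_eq_empty] at hQ
      obtain ⟨s, hs, hsp⟩ := c.exists_ne p
      refine c.not_cl (c.hS hp) hCW hpC ⟨x, hxC⟩ (c.hS hs) hsp (fun h => (hCH s h).1 hs)
        fun v hv w hw hvw => ?_
      rw [Finset.mem_erase] at hw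
      rcases hbd' v hv w hw.2 hvw with h | h | h
      · exact h
      · simp [hQ] at h
      · exact absurd h hw.1
  · -- only `A` sees the component: it is entered from `p` through a vertex `a` of `A`
    push Not at hp
    obtain ⟨p, hpS, -⟩ := c.exists_ne x
    obtain ⟨y, hy, a, haW, haH, hay⟩ :=
      c.conn.comp_nb hx (c.hS hpS) (Finset.mem_union_left _ hpS)
    have ha : a ∈ A := (Finset.mem_union.1 haH).resolve_left fun h => hp a h y hy hay
    have haC : a ∉ C := fun h => (hCH a h).2 ha
    have hpC : p ∉ C := fun h => (hCH p h).1 hpS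
    have hpa : p ≠ a := fun h => hSA p hpS (h ▸ ha)
    have hbd' : ∀ v ∈ C, ∀ w ∈ W, G.Adj v w → w ∈ C ∨ w ∈ A.erase a ∨ w = a := by
      intro v hv w hw hvw
      rcases hbd v hv w hw hvw with h | h | h
      · exact Or.inl h
      · exact absurd hvw.symm (hp w h v hv)
      · by_cases hwa : w = a
        · exact Or.inr (Or.inr hwa)
        · exact Or.inr (Or.inl (Finset.mem_erase.2 ⟨hwa, h⟩))
    refine c.split (Q := A.erase a) (R₁ := (S.erase p) ∪ (A.erase a)) (R₂ := {a, p}) (u := a) hCW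
      hCc haW haC ⟨y, hy, hay⟩ hbd' (fun v hv => (hCH v hv).1) (fun v hv => (hCH v hv).1) ?_
      (bip_exits_odd (fun b hb => hAe p b (Finset.mem_of_mem_erase hb)) (Finset.erase_subset _ _)
        (by have := hSe p hpS; have := Finset.card_erase_le (s := A) (a := a); omega) le_rfl)
      (Exits.of_path hpS ((PathIn.single (W := {a}) (by simp)).cons (by simpa using hpa)
        (hAS a ha p hpS).symm (by simp) (by simp))) ?_ ?_ ?_
      (Finset.union_subset ((Finset.erase_subset _ _).trans c.hS)
        ((Finset.erase_subset _ _).trans hA)) ?_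
    · by_contra hQ
      rw [Finset.not_nonempty_iff_eq_empty] at hQ
      refine c.not_cl haW hCW haC ⟨x, hxC⟩ (c.hS hpS) hpa hpC fun v hv w hw hvw => ?_
      rw [Finset.mem_erase] at hw
      rcases hbd' v hv w hw.2 hvw with h | h | h
      · exact h
      · simp [hQ] at h
      · exact absurd h hw.1
    · simp only [Finset.disjoint_insert_right, Finset.disjoint_singleton_right, Finset.mem_union,
        Finset.mem_erase]
      have h1 := hSA p hpS
      have h2 : a ∉ S := fun h => hSA a h ha
      tauto
    · refine Finset.disjoint_left.2 fun v hv hv' => ?_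
      rcases Finset.mem_union.1 hv with h | h
      · exact (hCH v hv').1 (Finset.mem_of_mem_erase h)
      · exact (hCH v hv').2 (Finset.mem_of_mem_erase h)
    · simp only [Finset.disjoint_insert_left, Finset.disjoint_singleton_left]
      exact ⟨haC, hpC⟩
    · exact Finset.insert_subset haW (Finset.singleton_subset_iff.2 (c.hS hpS))

/-- The terminal sets coincide and `A` is complete to `S`. If `#S = #A + 1`, a vertex of `A` is
dropped to satisfy the requirements of `Ctx.same_core`. -/
lemma Ctx.same {W S A : Finset V} {D : ℕ} (c : Ctx G W S S D)
    (hSI : ∀ x ∈ S, ∀ y ∈ S, ¬ G.Adj x y) (hND : NoDiamond G W S)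
    (hA : A ⊆ W) (hAS : ∀ a ∈ A, ∀ s ∈ S, G.Adj a s) (hcard : A.card + 1 ≤ S.card)
    (hle : ∀ v ∈ W, v ∉ A → v ∉ S → (S.filter (G.Adj v)).card ≤ A.card + 1) :
    Adm G W S S (D - 1) := by
  by_cases hW : W ⊆ S ∪ A
  · obtain ⟨v, hv⟩ := Finset.card_pos.1 (by omega : 0 < S.card)
    have hd := c.deg v (c.hS hv)
    have hf : (W.filter (G.Adj v)).card ≤ A.card := by
      refine Finset.card_le_card fun w hw => ?_
      rw [Finset.mem_filter] at hw
      exact (Finset.mem_union.1 (hW hw.1)).resolve_left fun h => hSI v hv w h hw.2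
    have hD : D ≤ A.card + 2 := by
      unfold dg at hd
      simp only [hv, if_true] at hd
      omega
    exact ((bip_exits_even hAS le_rfl hcard le_rfl).adm hv hv).mono
      (Finset.union_subset c.hS hA) le_rfl le_rfl (by omega)
  · obtain ⟨x, hx, hxH⟩ := Finset.not_subset.1 hW
    by_cases h2 : A.card + 2 ≤ S.card
    · exact c.same_core hND hA hAS h2 (fun v hv hvA hvS => Or.inl (hle v hv hvA hvS))
        (Finset.mem_sdiff.2 ⟨hx, hxH⟩)
    · have := c.hS2
      obtain ⟨a, ha⟩ := Finset.card_pos.1 (by omega : 0 < A.card)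
      have hc := Finset.card_erase_of_mem ha
      refine c.same_core (A := A.erase a) hND ((Finset.erase_subset _ _).trans hA)
        (fun b hb => hAS b (Finset.mem_of_mem_erase hb)) (by omega)
        (fun _ _ _ _ => Or.inr (by omega)) (x := x) ?_
      refine Finset.mem_sdiff.2 ⟨hx, fun h => hxH ?_⟩
      exact Finset.union_subset_union le_rfl (Finset.erase_subset _ _) h

/-! ### The induction -/

/-- Independent terminal sets without diamonds: unless `Ctx.bip_or` provides the paths from one of the
two sides, each terminal set lies in the bipartite graph at the other one, which forces `S = T`. -/
lemma Ctx.bip {W S T : Finset V} {D : ℕ} (c : Ctx G W S T D)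
    (hSI : ∀ x ∈ S, ∀ y ∈ S, ¬ G.Adj x y) (hTI : ∀ x ∈ T, ∀ y ∈ T, ¬ G.Adj x y)
    (hS : NoDiamond G W S) (hT : NoDiamond G W T) : Adm G W S T (D - 1) := by
  -- if `T` lies in a complete bipartite graph, then it lies on one side of it
  have key : ∀ {X Y A : Finset V}, (∀ x ∈ Y, ∀ y ∈ Y, ¬ G.Adj x y) → Y ⊆ cn G X A ∪ A →
      Y ⊆ cn G X A ∨ Y ⊆ A := by
    intro X Y A hI hY
    by_contra hcon
    rw [not_or, Finset.not_subset, Finset.not_subset] at hcon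
    obtain ⟨⟨t, ht, htB⟩, t', ht', htA⟩ := hcon
    exact hI t ht t' ht' ((Finset.mem_filter.1 ((Finset.mem_union.1 (hY ht')).resolve_right htA)).2
      t ((Finset.mem_union.1 (hY ht)).resolve_left htB))
  have irr : ∀ {X A : Finset V} {b : V}, b ∈ cn G X A → b ∉ A := fun hb hA =>
    ((Finset.mem_filter.1 hb).2 _ hA).ne rfl
  have sub : ∀ {X A : Finset V}, cn G X A ⊆ X := fun {X A} => Finset.filter_subset _ _
  rcases c.bip_or hSI hS with h | ⟨A, hA, hcard, hle, hTA⟩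
  · exact h
  rcases c.symm.bip_or hTI hT with h | ⟨A', hA', hcard', hle', hSA⟩
  · exact h.symm
  rcases key hTI hTA with h1 | h1 <;> rcases key hSI hSA with h2 | h2
  · obtain rfl : S = T := (h2.trans sub).antisymm (h1.trans sub)
    have hB : cn G S A = S := sub.antisymm h1
    rw [hB] at hcard hle
    exact c.same hSI hS hA (fun a ha s hs => (Finset.mem_filter.1 (h1 hs)).2 a ha) hcard hle
  · obtain ⟨b, hb⟩ := Finset.card_pos.1 (by omega : 0 < (cn G T A').card)
    exact absurd (h2 (sub (h1 (sub hb)))) (irr hb)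
  · obtain ⟨b, hb⟩ := Finset.card_pos.1 (by omega : 0 < (cn G S A).card)
    exact absurd (h1 (sub (h2 (sub hb)))) (irr hb)
  · have e1 := Finset.card_le_card h1
    have e2 := Finset.card_le_card h2
    have e3 := Finset.card_le_card (sub (X := S) (A := A))
    have e4 := Finset.card_le_card (sub (X := T) (A := A'))
    omega

/-- The induction step in the absence of cut vertices. -/
lemma Ctx.main {W S T : Finset V} {D : ℕ} (c : Ctx G W S T D) : Adm G W S T (D - 1) := by
  by_cases hS : ∀ x ∈ S, ∀ y ∈ S, ¬ G.Adj x y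
  swap
  · push Not at hS
    obtain ⟨x, hx, y, hy, h⟩ := hS
    exact c.clique hx hy h
  by_cases hT : ∀ x ∈ T, ∀ y ∈ T, ¬ G.Adj x y
  swap
  · push Not at hT
    obtain ⟨x, hx, y, hy, h⟩ := hT
    exact (c.symm.clique hx hy h).symm
  by_cases hS' : NoDiamond G W S
  swap
  · unfold NoDiamond at hS'
    push Not at hS'
    obtain ⟨b₁, h1, b₂, h2, hne, a₁, ha1, a₂, ha2, h11, h12, h21, h22, h⟩ := hS'
    exact c.diamond hS hT h1 h2 hne ha1 ha2 h11 h12 h21 h22 h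
  by_cases hT' : NoDiamond G W T
  swap
  · unfold NoDiamond at hT'
    push Not at hT'
    obtain ⟨b₁, h1, b₂, h2, hne, a₁, ha1, a₂, ha2, h11, h12, h21, h22, h⟩ := hT'
    exact (c.symm.diamond hT hS h1 h2 hne ha1 ha2 h11 h12 h21 h22 h).symm
  exact c.bip hS hT hS' hT'

/-- A side `X` of a cut vertex `b` is rooted at `S` and at the neighbourhood of `b`. -/
lemma Full.side {W S T X : Finset V} {b : V} (hF : Full G W S T) (hW : Conn G W) (hb : b ∈ W)
    (hX : X ⊆ W.erase b) (hn : X.Nonempty) (hc : Cl G (W.erase b) X) :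
    RC G X S (nb G {b}) := by
  have hXW : X ⊆ W := hX.trans (Finset.erase_subset _ _)
  have hbX : b ∉ X := fun h => by simpa using hX h
  refine ⟨hn, fun A hA hAn hAc => ⟨(hF b hb A (hA.trans hX) hAn (hc.trans hAc hA)).1, ?_⟩,
    fun b' hb' A hA hAn hAc => ?_⟩
  · by_contra hcon
    push Not at hcon
    refine hbX (hA ((hW A (hA.trans hXW) hAn fun v hv w hw hvw => ?_).symm ▸ hb : b ∈ A))
    by_cases hwb : w = b
    · exact absurd (mem_nb_single.2 (hwb ▸ hvw.symm)) (hcon v hv)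
    · exact hAc v hv w (hc v (hA hv) w (Finset.mem_erase.2 ⟨hwb, hw⟩) hvw) hvw
  · by_contra hcon
    push Not at hcon
    have hAX : A ⊆ X := hA.trans (Finset.erase_subset _ _)
    obtain ⟨s, hs, hsS⟩ := (hF b' (hXW hb') A (hA.trans (Finset.erase_subset_erase _ hXW)) hAn
      fun v hv w hw hvw => by
        rw [Finset.mem_erase] at hw
        by_cases hwb : w = b
        · exact absurd (mem_nb_single.2 (hwb ▸ hvw.symm)) (hcon v hv).2
        · exact hAc v hv w (Finset.mem_erase.2 ⟨hw.1, hc v (hAX hv) w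
            (Finset.mem_erase.2 ⟨hwb, hw.2⟩) hvw⟩) hvw).1
    exact (hcon s hs).1 hsS

/-- A root with a single neighbour would be separated from the rest by it. -/
lemma Full.two_le {W S T : Finset V} (hF : Full G W S T) (hW : 2 ≤ W.card) (hS : S ⊆ W) :
    2 ≤ S.card := by
  obtain ⟨v, hv⟩ := Finset.card_pos.1 (by omega : 0 < W.card)
  have key : ∀ b ∈ W, ∃ s ∈ S, s ≠ b := fun b hb => by
    obtain ⟨a, ha, hab⟩ := Finset.exists_mem_ne hW b
    obtain ⟨s, hs, hsS⟩ := (hF b hb (W.erase b) le_rfl ⟨a, Finset.mem_erase.2 ⟨hab, ha⟩⟩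
      fun _ _ w hw _ => hw).1
    exact ⟨s, hsS, (Finset.mem_erase.1 hs).1⟩
  obtain ⟨s, hs, -⟩ := key v hv
  obtain ⟨s', hs', hne⟩ := key s (hS hs)
  exact Finset.one_lt_card.2 ⟨s', hs', s, hs, hne⟩

/-- The degree with respect to a side `X` of a cut vertex drops by at most one. -/
lemma dg_side {W S T X : Finset V} {b : V} (hc : Cl G (W.erase b) X) {v : V} (hv : v ∈ X) :
    dg G W S T v ≤ dg G X S (nb G {b}) v + 1 := by
  have hcl : ∀ w ∈ W, G.Adj v w → w ∈ X ∨ w = b := fun w hw hvw => by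
    by_cases h : w = b
    · exact Or.inr h
    · exact Or.inl (hc v hv w (Finset.mem_erase.2 ⟨h, hw⟩) hvw)
  by_cases hbv : G.Adj b v
  · refine dg_le (R := {b}) (fun w hw hvw => (hcl w hw hvw).imp id (by simp)) ?_
    simp only [Finset.card_singleton, mem_nb_single, hbv, if_true]
    split_ifs <;> omega
  · refine dg_le (R := ∅) (fun w hw hvw => Or.inl ((hcl w hw hvw).resolve_right ?_)) ?_
    · rintro rfl
      exact hbv hvw.symm
    · simp only [Finset.card_empty]
      split_ifs <;> omega

/-- The rooted statement: degrees at least `D` give `D - 1` paths between the neighbourhoods of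
the roots whose lengths form an arithmetic progression with common difference `1` or `2`. -/
theorem rooted (n : ℕ) : ∀ (W S T : Finset V) (D : ℕ), W.card < n → RC G W S T →
    (∀ v ∈ W, D ≤ dg G W S T v) → Adm G W S T (max 1 (D - 1)) := by
  induction n with
  | zero => exact fun W S T D h => absurd h (Nat.not_lt_zero _)
  | succ n ih =>
    intro W S' T' D hn hRC' hdeg'
    -- only the terminals in `W` matter
    obtain ⟨S, hS, hSS, hSm⟩ : ∃ S ⊆ W, S ⊆ S' ∧ ∀ v ∈ W, v ∈ S' ↔ v ∈ S :=
      ⟨S' ∩ W, Finset.inter_subset_right, Finset.inter_subset_left, fun v hv => by simp [hv]⟩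
    obtain ⟨T, hT, hTT, hTm⟩ : ∃ T ⊆ W, T ⊆ T' ∧ ∀ v ∈ W, v ∈ T' ↔ v ∈ T :=
      ⟨T' ∩ W, Finset.inter_subset_right, Finset.inter_subset_left, fun v hv => by simp [hv]⟩
    have hRC : RC G W S T := hRC'.congr (fun v hv => (hSm v hv).1) fun v hv => (hTm v hv).1
    have hdeg : ∀ v ∈ W, D ≤ dg G W S T v := fun v hv => by
      have := hdeg' v hv
      simp only [dg, hSm v hv, hTm v hv] at this ⊢
      exact this
    suffices h : Adm G W S T (max 1 (D - 1)) from h.mono le_rfl hSS hTT le_rfl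
    have ih' : ∀ (W' S' T' : Finset V) (D' : ℕ), W'.card < W.card → RC G W' S' T' →
        (∀ v ∈ W', D' ≤ dg G W' S' T' v) → Adm G W' S' T' (max 1 (D' - 1)) :=
      fun W' S' T' D' h => ih W' S' T' D' (by omega)
    obtain ⟨z, hz⟩ := hRC.ne
    rcases Nat.lt_or_ge D 3 with hD | hD
    · obtain ⟨⟨s, hs, hsS⟩, t, ht, htT⟩ := hRC.c1 _ comp_subset ⟨z, self_mem_comp hz⟩ comp_cl
      exact ((comp_conn hz).adm hs ht hsS htT).mono comp_subset le_rfl le_rfl (by omega)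
    have hnb : ∃ w ∈ W, G.Adj z w := by
      by_contra hcon
      push Not at hcon
      have h0 : W.filter (G.Adj z) = ∅ := Finset.filter_eq_empty_iff.2 fun w hw => hcon w hw
      have := hdeg z hz
      unfold dg at this
      rw [h0, Finset.card_empty] at this
      split_ifs at this <;> omega
    obtain ⟨w, hw, hzw⟩ := hnb
    rcases hD.eq_or_lt with rfl | hD
    -- no vertex needs to be exempt, so any `z` will do
    · exact two_paths (W.card + 1) W S T z (Nat.lt_succ_self _) hRC ⟨w, hw, hzw.ne'⟩
        fun v hv _ => hdeg v hv
    by_cases hW : Conn G W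
    swap
    · unfold Conn at hW
      push Not at hW
      obtain ⟨A, hA, hAn, hAc, hAW⟩ := hW
      exact (ih' A S T D (Finset.card_lt_card (hA.ssubset_of_ne hAW)) (hRC.of_closed hA hAn hAc)
        fun v hv => (hdeg v (hA hv)).trans (dg_of_closed hAc hv)).mono hA le_rfl le_rfl le_rfl
    by_cases hF : Full G W S T
    swap
    · have hcut : ∃ b ∈ W, ∃ A ⊆ W.erase b, A.Nonempty ∧ Cl G (W.erase b) A ∧
          ((∀ v ∈ A, v ∉ S) ∨ (∀ v ∈ A, v ∉ T)) := by
        by_contra hcon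
        refine hF fun b hb A hA hAn hAc => ⟨?_, ?_⟩ <;> by_contra hcon'
        · exact hcon ⟨b, hb, A, hA, hAn, hAc, Or.inl fun v hv h => hcon' ⟨v, hv, h⟩⟩
        · exact hcon ⟨b, hb, A, hA, hAn, hAc, Or.inr fun v hv h => hcon' ⟨v, hv, h⟩⟩
      obtain ⟨b, hb, A, hA, hAn, hAc, h | h⟩ := hcut
      · obtain ⟨h1, h2, h3, h4⟩ := hRC.symm.cut hW hb hA hAn hAc h
        exact (h4 _ (le_max_left _ _) (ih' A _ _ D h2 h1 fun v hv =>
          ((hdeg v ((hA.trans (Finset.erase_subset _ _)) hv)).trans dg_symm.le).trans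
            (h3 v hv))).symm
      · obtain ⟨h1, h2, h3, h4⟩ := hRC.cut hW hb hA hAn hAc h
        exact h4 _ (le_max_left _ _) (ih' A _ _ D h2 h1 fun v hv =>
          (hdeg v ((hA.trans (Finset.erase_subset _ _)) hv)).trans (h3 v hv))
    by_cases hW2 : ∀ b ∈ W, Conn G (W.erase b)
    swap
    · push Not at hW2
      obtain ⟨b, hb, hWb⟩ := hW2
      unfold Conn at hWb
      push Not at hWb
      obtain ⟨X, hX, hXn, hXc, hXW⟩ := hWb
      have hYn : (W.erase b \ X).Nonempty := Finset.sdiff_nonempty.2 fun h => hXW (hX.antisymm h)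
      have hY : W.erase b \ X ⊆ W.erase b := Finset.sdiff_subset
      have hbX : b ∉ X := fun h => by simpa using hX h
      have hlt : ∀ Z ⊆ W.erase b, Z.card < W.card := fun Z hZ =>
        (Finset.card_le_card hZ).trans_lt (Finset.card_erase_lt_of_mem hb)
      have hXW' := hX.trans (Finset.erase_subset _ _)
      have hYW' := hY.trans (Finset.erase_subset _ _)
      -- the two sides of the cut vertex `b` provide `D - 2` paths each, which combine to `2 * D - 5`
      have h1 := ih' X S (nb G {b}) (D - 1) (hlt X hX) (hF.side hW hb hX hXn hXc) fun v hv => by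
        have := (hdeg v (hXW' hv)).trans (dg_side hXc hv)
        omega
      have h2 := ih' (W.erase b \ X) T (nb G {b}) (D - 1) (hlt _ hY)
        (hF.symm.side hW hb hY hYn hXc.compl) fun v hv => by
          have := (hdeg v (hYW' hv)).trans (dg_symm.le.trans (dg_side hXc.compl hv))
          omega
      refine ((h1.to_exits hbX).glue (W := W) h2.symm (le_max_left _ _) (le_max_left _ _)
        (Finset.disjoint_insert_left.2 ⟨by simp, Finset.disjoint_sdiff⟩)
        (Finset.insert_subset hb hXW') hYW').mono le_rfl le_rfl le_rfl ?_
      omega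
    have hWc : 2 ≤ W.card := Finset.one_lt_card.2 ⟨z, hz, w, hw, hzw.ne⟩
    exact (Ctx.main ⟨ih', hW, hW2, hS, hT, hF.two_le hWc hS, hF.symm.two_le hWc hT, hD,
      hdeg⟩).mono le_rfl le_rfl le_rfl (by omega)

/-! ### Cycles through a two-vertex cut -/

lemma conn_of_connected {W : Finset V} {s : Set V} (hs : ∀ v, v ∈ W ↔ v ∈ s)
    (h : (G.induce s).Connected) : Conn G W := by
  intro A hA ⟨a, ha⟩ hc
  refine hA.antisymm fun w hw => ?_
  have key : ∀ (u v : s), (G.induce s).Walk u v → u.1 ∈ A → v.1 ∈ A := by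
    intro u v p
    induction p with
    | nil => exact id
    | @cons u v w huv p ih => exact fun hu => ih (hc _ hu _ ((hs _).2 v.2) huv)
  obtain ⟨p⟩ := h.preconnected ⟨a, (hs a).1 (hA ha)⟩ ⟨w, (hs w).1 hw⟩
  exact key _ _ p ha

lemma connected_of_conn {W : Finset V} {s : Set V} (hs : ∀ v, v ∈ W ↔ v ∈ s)
    (hn : W.Nonempty) (h : Conn G W) : (G.induce s).Connected := by
  classical
  obtain ⟨w, hw⟩ := hn
  have : Nonempty s := ⟨⟨w, (hs w).1 hw⟩⟩
  refine ⟨fun u v => ?_⟩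
  have hA : (W.filter fun w => ∃ hw : w ∈ s, (G.induce s).Reachable u ⟨w, hw⟩) = W := by
    refine h _ (Finset.filter_subset _ _)
      ⟨u, Finset.mem_filter.2 ⟨(hs _).2 u.2, u.2, Reachable.refl _⟩⟩ ?_
    intro a ha x hx hax
    rw [Finset.mem_filter] at ha ⊢
    obtain ⟨-, has, har⟩ := ha
    refine ⟨hx, (hs x).1 hx, har.trans (Adj.reachable ?_)⟩
    exact hax
  have hv : (v : V) ∈ W := (hs _).2 v.2
  rw [← hA, Finset.mem_filter] at hv
  exact hv.2.2

/-- A part of the graph that is closed in the complement of `{x, y}`, rooted at `x` and `y`. -/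
lemma rc_of_cut {W W₀ : Finset V} {x y : V} (hxy : x ≠ y)
    (h2 : ∀ v : V, Conn G (Finset.univ.erase v)) (h0 : ∀ v, v ∈ W₀ ↔ v ≠ x ∧ v ≠ y)
    (hW : W ⊆ W₀) (hn : W.Nonempty) (hc : Cl G W₀ W) : RC G W (nb G {x}) (nb G {y}) := by
  have hx : x ∉ W := fun h => ((h0 x).1 (hW h)).1 rfl
  have hy : y ∉ W := fun h => ((h0 y).1 (hW h)).2 rfl
  refine ⟨hn, fun A hA hAn hAc => ⟨?_, ?_⟩, fun b hb A hA hAn hAc => ?_⟩ <;> by_contra hcon <;>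
    push Not at hcon
  · have := h2 y A (fun v hv => Finset.mem_erase.2 ⟨fun h => hy (h ▸ hA hv), Finset.mem_univ _⟩)
      hAn fun v hv w hw hvw => by
        by_cases hwx : w = x
        · exact absurd (mem_nb_single.2 (hwx ▸ hvw.symm)) (hcon v hv)
        · exact hc.trans hAc hA v hv w ((h0 w).2 ⟨hwx, (Finset.mem_erase.1 hw).1⟩) hvw
    exact hx (hA (this ▸ Finset.mem_erase.2 ⟨hxy, Finset.mem_univ _⟩))
  · have := h2 x A (fun v hv => Finset.mem_erase.2 ⟨fun h => hx (h ▸ hA hv), Finset.mem_univ _⟩)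
      hAn fun v hv w hw hvw => by
        by_cases hwy : w = y
        · exact absurd (mem_nb_single.2 (hwy ▸ hvw.symm)) (hcon v hv)
        · exact hc.trans hAc hA v hv w ((h0 w).2 ⟨(Finset.mem_erase.1 hw).1, hwy⟩) hvw
    exact hy (hA (this ▸ Finset.mem_erase.2 ⟨hxy.symm, Finset.mem_univ _⟩))
  · have hAW : A ⊆ W := hA.trans (Finset.erase_subset _ _)
    have := h2 b A (fun v hv => Finset.mem_erase.2 ⟨(Finset.mem_erase.1 (hA hv)).1,
      Finset.mem_univ _⟩) hAn fun v hv w hw hvw => by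
        by_cases hwx : w = x
        · exact absurd (mem_nb_single.2 (hwx ▸ hvw.symm)) (hcon v hv).1
        by_cases hwy : w = y
        · exact absurd (mem_nb_single.2 (hwy ▸ hvw.symm)) (hcon v hv).2
        exact hAc v hv w (Finset.mem_erase.2 ⟨(Finset.mem_erase.1 hw).1,
          hc v (hAW hv) w ((h0 w).2 ⟨hwx, hwy⟩) hvw⟩) hvw
    exact hx (hAW (this ▸ Finset.mem_erase.2 ⟨fun h => hx (h ▸ hb), Finset.mem_univ _⟩))

/-- The roots account for the neighbours `x` and `y` outside of `W`. -/
lemma degree_le_dg {W W₀ : Finset V} {x y : V} (hxy : x ≠ y)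
    (h0 : ∀ v, v ∈ W₀ ↔ v ≠ x ∧ v ≠ y) (hc : Cl G W₀ W) {v : V} (hv : v ∈ W) :
    G.degree v ≤ dg G W (nb G {x}) (nb G {y}) v := by
  have h1 : G.degree v = dg G Finset.univ ∅ ∅ v := by
    rw [← G.card_neighborFinset_eq_degree, G.neighborFinset_eq_filter]
    simp [dg]
  rw [h1]
  refine dg_le (l := 0) (R := ({x, y} : Finset V).filter (G.Adj v)) (fun w _ hvw => ?_) ?_
  · by_cases hw : w ∈ W₀
    · exact Or.inl (hc v hv w hw hvw)
    · refine Or.inr (Finset.mem_filter.2 ⟨?_, hvw⟩)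
      rw [h0] at hw
      simp only [Finset.mem_insert, Finset.mem_singleton]
      tauto
  · simp only [Finset.filter_insert, Finset.filter_singleton, mem_nb_single, G.adj_comm x v,
      G.adj_comm y v, Finset.notMem_empty, if_false]
    split_ifs <;> simp [hxy]

/-- Paths through two disjoint sets between neighbours of `x` and neighbours of `y` form a cycle
together with `x` and `y`. -/
lemma cycle_of_paths {W₁ W₂ : Finset V} {x y s t s' t' : V} {n m : ℕ} (hd : Disjoint W₁ W₂)
    (hxy : x ≠ y) (hx1 : x ∉ W₁) (hx2 : x ∉ W₂) (hy1 : y ∉ W₁) (hy2 : y ∉ W₂)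
    (h1 : PathIn G W₁ s t n) (h2 : PathIn G W₂ s' t' m) (hs : G.Adj x s) (ht : G.Adj y t)
    (hs' : G.Adj x s') (ht' : G.Adj y t') :
    ∃ c : G.Walk x x, c.IsCycle ∧ c.length = n + m + 4 := by
  have hss : s ≠ s' := fun h => Finset.disjoint_left.1 hd h1.left_mem (h ▸ h2.left_mem)
  have k1 : PathIn G (insert y W₁) s y (n + 1) :=
    h1.snoc hy1 ht.symm (Finset.subset_insert _ _) (Finset.mem_insert_self _ _)
  obtain ⟨p, hp, hps, hpl⟩ := k1.glue (W := insert y W₁ ∪ W₂) h2.symm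
    (Finset.disjoint_insert_left.2 ⟨hy2, hd⟩) ht' Finset.subset_union_left
    Finset.subset_union_right
  have hxp : x ∉ p.support := fun h => by
    have := hps x h
    simp [hxy, hx1, hx2] at this
  refine ⟨.cons hs (p.concat hs'.symm), ?_, by simp [hpl]; omega⟩
  rw [Walk.cons_isCycle_iff]
  refine ⟨hp.concat hxp _, ?_⟩
  rw [Walk.edges_concat, List.concat_eq_append, List.mem_append, not_or]
  refine ⟨fun h => hxp (Walk.fst_mem_support_of_mem_edges _ h), ?_⟩
  simp only [List.mem_singleton, Sym2.eq_iff, not_or, not_and]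
  exact ⟨fun h => absurd h hs'.ne, fun _ => hss⟩

lemma cycles_of_adm {W₁ W₂ : Finset V} {x y : V} {k : ℕ} (hd : Disjoint W₁ W₂)
    (hxy : x ≠ y) (hx1 : x ∉ W₁) (hx2 : x ∉ W₂) (hy1 : y ∉ W₁) (hy2 : y ∉ W₂)
    (h1 : Adm G W₁ (nb G {x}) (nb G {y}) k) (h2 : Adm G W₂ (nb G {x}) (nb G {y}) k) :
    ∃ a, 2 ≤ a ∧ ∀ i < k, ∃ c : G.Walk x x, c.IsCycle ∧ c.length = a + 2 * i := by
  obtain ⟨a, d, hd1, h1⟩ := h1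
  obtain ⟨b, e, hd2, h2⟩ := h2
  have key : ∀ i < k, ∀ j < k, ∃ c : G.Walk x x, c.IsCycle ∧
      c.length = (a + i * d) + (b + j * e) + 4 := by
    intro i hi j hj
    obtain ⟨s, hs, t, ht, hp⟩ := h1 i hi
    obtain ⟨s', hs', t', ht', hp'⟩ := h2 j hj
    rw [mem_nb_single] at hs ht hs' ht'
    exact cycle_of_paths hd hxy hx1 hx2 hy1 hy2 hp hp' hs ht hs' ht'
  refine ⟨a + b + 4, by omega, fun i hi => ?_⟩
  -- steps of two come from one of the two parts, or from a step of one in each of them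
  rcases hd1 with rfl | rfl
  · rcases hd2 with rfl | rfl
    · obtain ⟨c, hc, hl⟩ := key i hi i hi
      exact ⟨c, hc, by omega⟩
    · obtain ⟨c, hc, hl⟩ := key 0 (by omega) i hi
      exact ⟨c, hc, by omega⟩
  · obtain ⟨c, hc, hl⟩ := key i hi 0 (by omega)
    exact ⟨c, hc, by omega⟩

/-- The two sides of a cut `{x, y}` both contain `k` admissible paths between the neighbourhoods of
`x` and `y`. -/
lemma exists_cycles_of_cut {k : ℕ} (hk : 0 < k) (hconn : G.Connected)
    (h2 : ∀ v : V, (G.induce ({v}ᶜ : Set V)).Connected) {s : Set V} (hs : s.ncard ≤ 2)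
    (hcard : 4 ≤ Fintype.card V) (hns : ¬ (G.induce sᶜ).Connected)
    (hdeg : ∀ v : V, k + 1 ≤ G.degree v) :
    ∃ (x : V) (a : ℕ), 2 ≤ a ∧ ∀ i < k, ∃ c : G.Walk x x, c.IsCycle ∧ c.length = a + 2 * i := by
  have hs2 : s.ncard = 2 := by
    have h0 : s.ncard ≠ 0 := fun h => by
      rw [Set.ncard_eq_zero] at h
      subst h
      rw [Set.compl_empty] at hns
      exact hns ((induceUnivIso G).connected_iff.2 hconn)
    have h1 : s.ncard ≠ 1 := fun h => by
      obtain ⟨v, rfl⟩ := Set.ncard_eq_one.1 h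
      exact hns (h2 v)
    omega
  obtain ⟨x, y, hxy, rfl⟩ := Set.ncard_eq_two.1 hs2
  obtain ⟨W₀, h0⟩ : ∃ W₀ : Finset V, ∀ v, v ∈ W₀ ↔ v ≠ x ∧ v ≠ y :=
    ⟨Finset.univ.filter fun v => v ≠ x ∧ v ≠ y, fun v => by simp⟩
  have hn0 : W₀.Nonempty := by
    by_contra hcon
    rw [Finset.not_nonempty_iff_eq_empty] at hcon
    have : (Finset.univ : Finset V) ⊆ {x, y} := fun v _ => by
      have := h0 v
      simp only [hcon, Finset.notMem_empty, false_iff] at this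
      simp only [Finset.mem_insert, Finset.mem_singleton]
      tauto
    have := (Finset.card_le_card this).trans Finset.card_le_two
    rw [Finset.card_univ] at this
    omega
  have hnc : ¬ Conn G W₀ := fun h => hns (connected_of_conn (fun v => by simp [h0]) hn0 h)
  unfold Conn at hnc
  push Not at hnc
  obtain ⟨A, hA, hAn, hAc, hAW⟩ := hnc
  have h2' : ∀ v : V, Conn G (Finset.univ.erase v) := fun v =>
    conn_of_connected (fun w => by simp) (h2 v)
  have adm : ∀ W ⊆ W₀, W.Nonempty → Cl G W₀ W → Adm G W (nb G {x}) (nb G {y}) k := by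
    intro W hW hn hc
    exact (rooted (W.card + 1) W _ _ (k + 1) (Nat.lt_succ_self _)
      (rc_of_cut hxy h2' h0 hW hn hc) fun v hv =>
        (hdeg v).trans (degree_le_dg hxy h0 hc hv)).mono le_rfl le_rfl le_rfl (by omega)
  have hx : ∀ W ⊆ W₀, x ∉ W := fun W hW h => ((h0 x).1 (hW h)).1 rfl
  have hy : ∀ W ⊆ W₀, y ∉ W := fun W hW h => ((h0 y).1 (hW h)).2 rfl
  have hB : W₀ \ A ⊆ W₀ := Finset.sdiff_subset
  exact ⟨x, cycles_of_adm Finset.disjoint_sdiff hxy (hx A hA) (hx _ hB) (hy A hA) (hy _ hB)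
    (adm A hA hAn hAc) (adm _ hB (Finset.sdiff_nonempty.2 fun h => hAW (hA.antisymm h))
      hAc.compl)⟩

lemma exists_triangle (hcard : Fintype.card V = 3) (hdeg : ∀ v : V, 2 ≤ G.degree v) :
    ∃ (x : V) (c : G.Walk x x), c.IsCycle := by
  have hadj : ∀ u v : V, u ≠ v → G.Adj u v := by
    intro u v huv
    have hsub : G.neighborFinset u ⊆ Finset.univ.erase u := fun w hw => by
      rw [mem_neighborFinset] at hw
      exact Finset.mem_erase.2 ⟨hw.ne', Finset.mem_univ _⟩
    have := Finset.eq_of_subset_of_card_le hsub (by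
      rw [Finset.card_erase_of_mem (Finset.mem_univ _), Finset.card_univ, hcard]
      exact hdeg u)
    rw [← mem_neighborFinset, this]
    exact Finset.mem_erase.2 ⟨huv.symm, Finset.mem_univ _⟩
  obtain ⟨a, b, c, hab, hac, hbc⟩ := Fintype.two_lt_card_iff.1 (by omega : 2 < Fintype.card V)
  refine ⟨a, .cons (hadj a b hab) (.cons (hadj b c hbc) (.cons (hadj c a hac.symm) .nil)), ?_⟩
  rw [Walk.cons_isCycle_iff]
  simp [Walk.cons_isPath_iff, hab.symm, hac, hac.symm, hbc, hab]

end CycLen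

/-- If `G` is 2-connected but not 3-connected and has minimum degree at least `k + 1`,
then `G` contains `k` cycles satisfying the length condition. -/
theorem k_cycles_length_condition_of_not_threeConnected {V : Type*} [Fintype V]
    (k : ℕ) (hk : 0 < k) (G : SimpleGraph V) [DecidableRel G.Adj]
    (h2 : TwoConnected G) (h3 : ¬ ThreeConnected G)
    (hdeg : ∀ v : V, k + 1 ≤ G.degree v) :
    ∃ (v : ℕ → V) (c : ∀ i : ℕ, G.Walk (v i) (v i)),
      (∀ i, 1 ≤ i → i ≤ k → (c i).IsCycle) ∧
      LengthSeq k (fun i => (c i).length) := by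
  classical
  obtain ⟨hconn, hcard, hdel⟩ := h2
  obtain ⟨x, a, ha, h⟩ : ∃ (x : V) (a : ℕ), 2 ≤ a ∧
      ∀ i < k, ∃ c : G.Walk x x, c.IsCycle ∧ c.length = a + 2 * i := by
    rcases Nat.lt_or_ge (Fintype.card V) 4 with h4 | h4
    · obtain ⟨v⟩ := hconn.nonempty
      have := G.degree_lt_card_verts v
      have := hdeg v
      obtain rfl : k = 1 := by omega
      obtain ⟨x, c, hc⟩ := CycLen.exists_triangle (by omega) hdeg
      refine ⟨x, c.length, by have := hc.three_le_length; omega, fun i hi => ⟨c, hc, by omega⟩⟩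
    · obtain ⟨s, hs, hns⟩ : ∃ s : Set V, s.ncard ≤ 2 ∧ ¬ (G.induce sᶜ).Connected := by
        by_contra hcon
        push Not at hcon
        exact h3 ⟨h4, hcon⟩
      exact CycLen.exists_cycles_of_cut hk hconn hdel hs h4 hns hdeg
  -- outside `1, …, k` the walks are arbitrary
  have hex : ∀ i, ∃ c : G.Walk x x, 1 ≤ i → i ≤ k → c.IsCycle ∧ c.length = a + 2 * (i - 1) := by
    intro i
    by_cases hi : i - 1 < k
    · obtain ⟨c, hc⟩ := h (i - 1) hi
      exact ⟨c, fun _ _ => hc⟩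
    · exact ⟨.nil, fun _ _ => by omega⟩
  choose c hc using hex
  refine ⟨fun _ => x, c, fun i h1 h2 => (hc i h1 h2).1, ?_, fun i h1 h2 => ?_⟩
  · have := (hc 1 le_rfl hk).2
    change 2 ≤ (c 1).length
    omega
  · have e1 := (hc i h1 (by omega)).2
    have e2 := (hc (i + 1) (by omega) (by omega)).2
    change (c (i + 1)).length = (c i).length + 2
    omega
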